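/- arXiv:2411.00271 — 2 statements merged into one kernel-verified Lean document; each statement's English description precedes it below -/
import Mathlib

section
/- Under the standing assumptions (R Dedekind with torsion class group, O an order with conductor f, R/f finite, every class of Cl(R) containing a prime ideal coprime to f, O transfer Krull), assume |Cl(R)| ≠ 2. If P₁, P₂ are prime ideals of R coprime to f with [P₁] = −[P₂] in Cl(R), then the principal ideal P₁P₂ is generated by an element of O (up to R-units). -/
open scoped nonZeroDivisors

section MonoidDefs
variable {H B : Type*} [CommMonoid H] [CommMonoid B]

/-- The set of lengths of `a`: `{0}` for units, otherwise the set of `k` such that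
`a` is a product of `k` atoms (irreducible elements). -/
def lengthsSet (a : H) : Set ℕ :=
  {k | (IsUnit a ∧ k = 0) ∨
    (¬ IsUnit a ∧ ∃ l : Multiset H, Multiset.card l = k ∧ (∀ x ∈ l, Irreducible x) ∧ l.prod = a)}

/-- A transfer homomorphism: (T1) `B = θ(H)·B^×` and `θ⁻¹(B^×) = H^×`;
(T2) factorizations of `θ u` lift to factorizations of `u` up to associates. -/
def IsTransferHom (θ : H →* B) : Prop :=
  (∀ b : B, ∃ u : H, ∃ ε : Bˣ, b = θ u * ε) ∧
  (∀ u : H, IsUnit (θ u) → IsUnit u) ∧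
  (∀ u : H, ∀ b c : B, θ u = b * c →
    ∃ v w : H, u = v * w ∧ Associated (θ v) b ∧ Associated (θ w) c)

/-- A Krull monoid: a monoid admitting a divisor homomorphism into a
free abelian monoid. -/
def IsKrullMonoid (H : Type*) [CommMonoid H] : Prop :=
  ∃ (ι : Type) (d : H →* Multiplicative (ι →₀ ℕ)), ∀ a b : H, d a ∣ d b → a ∣ b

/-- Half-factorial: all factorizations of an element into atoms have the same length. -/
def IsHalfFactorial (A : Type*) [CommMonoid A] : Prop :=
  ∀ (a : A) (l m : Multiset A), (∀ x ∈ l, Irreducible x) → (∀ x ∈ m, Irreducible x) →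
    l.prod = a → m.prod = a → Multiset.card l = Multiset.card m

/-- An absolutely irreducible element: an atom all of whose powers factor uniquely
into atoms, up to associates. -/
def AbsolutelyIrreducible (a : H) : Prop :=
  Irreducible a ∧ ∀ n : ℕ, 0 < n → ∀ l m : Multiset H,
    (∀ x ∈ l, Irreducible x) → (∀ x ∈ m, Irreducible x) →
    l.prod = a ^ n → m.prod = a ^ n → Multiset.Rel Associated l m

end MonoidDefs

section RingDefs
variable {R : Type*} [CommRing R]

/-- The conductor of a subring `O ⊆ R`: the largest ideal of `R` contained in `O`. -/
def Subring.conductor (O : Subring R) : Ideal R where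
  carrier := {x | ∀ r : R, x * r ∈ O}
  add_mem' := by
    intro a b ha hb r
    have h : (a + b) * r = a * r + b * r := by ring
    rw [h]; exact O.add_mem (ha r) (hb r)
  zero_mem' := by intro r; simpa using O.zero_mem
  smul_mem' := by
    intro c x hx r
    have h : c • x * r = x * (c * r) := by simp [smul_eq_mul]; ring
    rw [h]; exact hx (c * r)

/-- `a` is a regular element modulo the ideal `f`. -/
def RegF (f : Ideal R) (a : R) : Prop := IsUnit (Ideal.Quotient.mk f a)

end RingDefs

section TK
variable {K : Type*} [CommRing K]

/-- `x` and `y` are associated within the submonoid `H` of `K`. -/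
def AssocIn (H : Submonoid K) (x y : K) : Prop :=
  ∃ ε ∈ H, (∃ ε' ∈ H, ε * ε' = 1) ∧ x = y * ε

end TK

variable {R₀ : Type*}

/-- `H` is a Krull overmonoid of `O^∙` inside the quotient field of `O` (which is the
quotient field of `R`), with `O^∙ ⊆ H ⊆ q(O^∙)`, such that the inclusion `O^∙ ↪ H`
is a transfer homomorphism; this witnesses that `O` is transfer Krull. -/
structure IsTKOvermonoid {R : Type*} [CommRing R] [IsDomain R] [IsDedekindDomain R]
    (O : Subring R) (H : Submonoid (FractionRing R)) : Prop where
  nonzero : ∀ x ∈ H, x ≠ 0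
  incl : ∀ a : R, a ∈ O → a ≠ 0 → algebraMap R (FractionRing R) a ∈ H
  inQuot : ∀ x ∈ H, ∃ a b : R, a ∈ O ∧ b ∈ O ∧ a ≠ 0 ∧ b ≠ 0 ∧
    x * algebraMap R (FractionRing R) b = algebraMap R (FractionRing R) a
  krull : IsKrullMonoid ↥H
  t1 : ∀ x ∈ H, ∃ a : R, a ∈ O ∧ a ≠ 0 ∧ ∃ ε ∈ H, (∃ ε' ∈ H, ε * ε' = 1) ∧
    x = algebraMap R (FractionRing R) a * ε
  t1' : ∀ a : R, a ∈ O → a ≠ 0 →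
    (∃ y ∈ H, algebraMap R (FractionRing R) a * y = 1) → ∃ b ∈ O, a * b = 1
  t2 : ∀ a : R, a ∈ O → a ≠ 0 → ∀ x ∈ H, ∀ y ∈ H,
    algebraMap R (FractionRing R) a = x * y →
    ∃ v w : R, v ∈ O ∧ w ∈ O ∧ a = v * w ∧
      AssocIn H (algebraMap R (FractionRing R) v) x ∧
      AssocIn H (algebraMap R (FractionRing R) w) y

/-!
For `a` prime to the conductor `f`, some power `a ^ n` lies in `O`. The transfer homomorphism
`O^∙ ↪ H` lifts the factorization `a ⋯ a` in `H` to `a ^ n = v₁ ⋯ vₙ`, up to units, with `vᵢ ∈ O`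
associated to `a` in `H`. If none of the `vᵢ` has fewer prime ideal factors than `a`, then all have
exactly as many, which leaves few possibilities for `vᵢ R`.

For `aR = P₁ P₂` this suffices unless `g = [P₁]` has order two. In that case take a class `h ≠ 0, g`
and primes `Q ∈ h`, `Q' ∈ g - h`. The same counting puts generators of `P₁ Q Q'`, `P₂ Q Q'` and
`P₂ ^ 2` into `O`, and `P₂ Q Q' · P₁ P₂ = P₁ Q Q' · P₂ ^ 2` allows cancellation, because elements of
`O` that are prime to `f` may be divided out.

For `aR = X Y Z` one has to exclude a generator of `X ^ 2` associated to `a` in `H`. With primes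
`S ∈ -[Y]` and `T ∈ -[Z]`, it would make a generator of `X S T` associated to the product of
generators of `Y S` and `Z T`. Lifting this factorization into two nonunits from a power of the
generator of `X S T`, where each lifted factor has at least two prime factors, gives `4 ≤ 3`.
-/

open UniqueFactorizationMonoid

theorem IsKrullMonoid.dvd_of_forall_pow_dvd_mul_pow {M : Type*} [CommMonoid M]
    (hM : IsKrullMonoid M) {x y z : M} (h : ∀ n : ℕ, y ^ n ∣ z * x ^ n) : y ∣ x := by
  obtain ⟨ι, d, hd⟩ := hM
  have exponent_le (i : ι) : (d y).toAdd i ≤ (d x).toAdd i := by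
    obtain ⟨w, hw⟩ := h ((d z).toAdd i + 1)
    have key := congrArg (fun u => (d u).toAdd i) hw
    simp only [map_mul, map_pow, toAdd_mul, toAdd_pow, Finsupp.add_apply, Finsupp.smul_apply,
      smul_eq_mul] at key
    by_contra! hlt
    nlinarith
  refine hd y x ⟨.ofAdd ((d x).toAdd - (d y).toAdd), Multiplicative.toAdd.injective ?_⟩
  rw [toAdd_mul, toAdd_ofAdd, add_tsub_cancel_of_le (Finsupp.le_def.mpr exponent_le)]

theorem exists_ne_ne_of_card_ne_two {α : Type*} (h : Nat.card α ≠ 2) {x y : α} (hxy : x ≠ y) :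
    ∃ z, z ≠ x ∧ z ≠ y := by
  contrapose! h
  refine Nat.card_eq_two_iff.mpr ⟨x, y, hxy, Set.eq_univ_of_forall fun z => ?_⟩
  exact or_iff_not_imp_left.mpr (h z)

section Conductor

variable {R : Type*} [CommRing R]

theorem ne_bot_of_finite_quotient [IsDomain R] (hR : ¬ IsField R) (f : Ideal R)
    [Finite (R ⧸ f)] : f ≠ ⊥ := by
  rintro rfl
  have := Finite.of_equiv _ (RingEquiv.quotientBot R).toEquiv
  exact hR (Finite.isField_of_domain R)

theorem mem_of_mem_conductor {O : Subring R} {x : R} (hx : x ∈ O.conductor) : x ∈ O :=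
  mul_one x ▸ hx 1

theorem regF_of_isCoprime_span {f : Ideal R} {a : R} (h : IsCoprime (Ideal.span {a}) f) :
    RegF f a := by
  obtain ⟨x, hx, y, hy, hxy⟩ := Ideal.isCoprime_iff_exists.mp h
  obtain ⟨r, rfl⟩ := Ideal.mem_span_singleton'.mp hx
  refine .of_mul_eq_one_right (Ideal.Quotient.mk f r) ?_
  rw [← map_mul, ← map_one (Ideal.Quotient.mk f), ← hxy, map_add,
    Ideal.Quotient.eq_zero_iff_mem.mpr hy, add_zero]

theorem RegF.exists_pow_sub_one_mem {f : Ideal R} [Finite (R ⧸ f)] {a : R} (ha : RegF f a) :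
    ∃ n, n ≠ 0 ∧ a ^ n - 1 ∈ f := by
  obtain ⟨u, hu⟩ := ha
  obtain ⟨n, hn, h⟩ := (isOfFinOrder_of_finite u).exists_pow_eq_one
  refine ⟨n, hn.ne', ?_⟩
  rw [← Ideal.Quotient.eq, map_pow, ← hu, ← Units.val_pow_eq_pow_val, h, Units.val_one, map_one]

theorem RegF.exists_pow_mem {O : Subring R} [Finite (R ⧸ O.conductor)] {a : R}
    (ha : RegF O.conductor a) : ∃ n, n ≠ 0 ∧ a ^ n ∈ O := by
  obtain ⟨n, hn, h⟩ := ha.exists_pow_sub_one_mem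
  exact ⟨n, hn, sub_add_cancel (a ^ n) 1 ▸ O.add_mem (mem_of_mem_conductor h) O.one_mem⟩

theorem RegF.mem_of_mul_mem {O : Subring R} [Finite (R ⧸ O.conductor)] {a c : R}
    (ha : RegF O.conductor a) (haO : a ∈ O) (hac : a * c ∈ O) : c ∈ O := by
  obtain ⟨n, hn, h⟩ := ha.exists_pow_sub_one_mem
  obtain ⟨k, rfl⟩ := Nat.exists_eq_succ_of_ne_zero hn
  have : c = a ^ k * (a * c) - (a ^ (k + 1) - 1) * c := by ring
  rw [this]
  exact O.sub_mem (O.mul_mem (O.pow_mem haO k) hac) (h c)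

/-- The relation `I ~ O`: the ideal `I` is generated by an element of the subring `O`. -/
def HasGeneratorIn (O : Subring R) (I : Ideal R) : Prop :=
  ∃ b ∈ O, Ideal.span {b} = I

theorem HasGeneratorIn.mul {O : Subring R} {I J : Ideal R} (hI : HasGeneratorIn O I)
    (hJ : HasGeneratorIn O J) : HasGeneratorIn O (I * J) := by
  obtain ⟨a, ha, rfl⟩ := hI
  obtain ⟨b, hb, rfl⟩ := hJ
  exact ⟨a * b, O.mul_mem ha hb, (Ideal.span_singleton_mul_span_singleton a b).symm⟩

theorem HasGeneratorIn.of_mul_left [IsDomain R] {O : Subring R} [Finite (R ⧸ O.conductor)]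
    {I J : Ideal R} (hI : HasGeneratorIn O I) (hI0 : I ≠ ⊥) (hcop : IsCoprime I O.conductor)
    (hIJ : HasGeneratorIn O (I * J)) : HasGeneratorIn O J := by
  obtain ⟨a, ha, rfl⟩ := hI
  obtain ⟨b, hbO, hb⟩ := hIJ
  obtain ⟨c, -, rfl⟩ := Ideal.mem_span_singleton_mul.mp (hb ▸ Ideal.mem_span_singleton_self b)
  refine ⟨c, (regF_of_isCoprime_span hcop).mem_of_mul_mem ha hbO, ?_⟩
  rw [← Ideal.span_singleton_mul_span_singleton] at hb
  exact (Ideal.span_singleton_mul_right_inj (by simpa using hI0)).mp hb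

theorem not_isUnit_of_span_eq_prod {s : Multiset (Ideal R)⁰} {P : (Ideal R)⁰} (hPs : P ∈ s)
    (hP : (P : Ideal R).IsPrime) {a : R} (has : Ideal.span {a} = (s.prod : Ideal R)) :
    ¬ IsUnit a := by
  intro hu
  have hdvd : (P : Ideal R) ∣ (s.prod : Ideal R) :=
    map_dvd (Submonoid.subtype _) (Multiset.dvd_prod hPs)
  rw [← has, Ideal.span_singleton_eq_top.mpr hu] at hdvd
  exact hP.ne_top (top_le_iff.mp (Ideal.le_of_dvd hdvd))

/-- The submonoid of nonzero elements of `R` that are regular modulo the ideal `f`. -/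
def regularMod (f : Ideal R) : Submonoid R :=
  R⁰ ⊓ (IsUnit.submonoid (R ⧸ f)).comap (Ideal.Quotient.mk f)

end Conductor

section Dedekind

variable {R : Type*} [CommRing R] [IsDedekindDomain R] {f : Ideal R}

/-- The set `spec_f(R)` of nonzero prime ideals coprime to `f`. For a prime of a Dedekind domain,
coprimality to `f` amounts to not containing `f`. -/
def specAway (f : Ideal R) : Set (Ideal R)⁰ :=
  {P | (P : Ideal R).IsPrime ∧ ¬ f ≤ P}

theorem prime_of_mem_specAway {P : (Ideal R)⁰} (hP : P ∈ specAway f) : Prime (P : Ideal R) :=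
  Ideal.prime_of_isPrime (nonZeroDivisors.coe_ne_zero P) hP.1

theorem isCoprime_of_mem_specAway {P : (Ideal R)⁰} (hP : P ∈ specAway f) :
    IsCoprime (P : Ideal R) f := by
  have hmax : (P : Ideal R).IsMaximal := hP.1.isMaximal (nonZeroDivisors.coe_ne_zero P)
  rw [Ideal.isCoprime_iff_sup_eq]
  by_contra hne
  exact hP.2 (le_sup_right.trans_eq (hmax.eq_of_le hne le_sup_left).symm)

theorem isCoprime_prod_of_mem_specAway {s : Multiset (Ideal R)⁰} (hs : ∀ P ∈ s, P ∈ specAway f) :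
    IsCoprime (s.prod : Ideal R) f := by
  induction s using Multiset.induction with
  | empty => exact isCoprime_one_left
  | cons P s ih =>
    rw [Multiset.forall_mem_cons] at hs
    rw [Multiset.prod_cons, Submonoid.coe_mul]
    exact (isCoprime_of_mem_specAway hs.1).mul_left (ih hs.2)

theorem exists_mem_regularMod_span_eq_prod {s : Multiset (Ideal R)⁰}
    (hs : ∀ P ∈ s, P ∈ specAway f) (h : ClassGroup.mk0 s.prod = 1) :
    ∃ a ∈ regularMod f, Ideal.span {a} = (s.prod : Ideal R) := by
  obtain ⟨a, ha⟩ := (ClassGroup.mk0_eq_one_iff s.prod.2).mp h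
  have ha : Ideal.span {a} = (s.prod : Ideal R) := ha.symm
  have hcop := ha ▸ isCoprime_prod_of_mem_specAway hs
  refine ⟨a, ⟨mem_nonZeroDivisors_of_ne_zero ?_, regF_of_isCoprime_span hcop⟩, ha⟩
  rintro rfl
  exact nonZeroDivisors.coe_ne_zero s.prod (by rw [← ha, Ideal.span_singleton_zero]; rfl)

theorem mk0_eq_one_of_span_eq {I : (Ideal R)⁰} {a : R} (h : Ideal.span {a} = (I : Ideal R)) :
    ClassGroup.mk0 I = 1 :=
  (ClassGroup.mk0_eq_one_iff I.2).mpr ⟨a, h.symm⟩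

theorem exists_mem_regularMod_span_eq_mul
    (hcls : ∀ c, ∃ P ∈ specAway f, ClassGroup.mk0 P = c) {P : (Ideal R)⁰} (hP : P ∈ specAway f) :
    ∃ Q ∈ specAway f, ClassGroup.mk0 Q = (ClassGroup.mk0 P)⁻¹ ∧
      ∃ a ∈ regularMod f, ¬ IsUnit a ∧ Ideal.span {a} = (P * Q : Ideal R) := by
  obtain ⟨Q, hQ, hQP⟩ := hcls (ClassGroup.mk0 P)⁻¹
  obtain ⟨a, ha, has⟩ := exists_mem_regularMod_span_eq_prod (f := f) (s := {P, Q})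
    (by simp [hP, hQ]) (by simp [hQP])
  exact ⟨Q, hQ, hQP, a, ha, not_isUnit_of_span_eq_prod (by simp) hP.1 has, by simpa using has⟩

theorem exists_mk0_mul_mk0_eq (hcls : ∀ c, ∃ P ∈ specAway f, ClassGroup.mk0 P = c)
    (hcard : Nat.card (ClassGroup R) ≠ 2) {g : ClassGroup R} (hg : g ≠ 1) :
    ∃ Q ∈ specAway f, ∃ Q' ∈ specAway f, ClassGroup.mk0 Q ≠ 1 ∧ ClassGroup.mk0 Q' ≠ 1 ∧
      ClassGroup.mk0 Q * ClassGroup.mk0 Q' = g ∧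
      (ClassGroup.mk0 Q = ClassGroup.mk0 Q' → Q = Q') := by
  obtain ⟨h, hh1, hhg⟩ := exists_ne_ne_of_card_ne_two hcard hg.symm
  obtain ⟨Q, hQ, rfl⟩ := hcls h
  by_cases hsq : ClassGroup.mk0 Q * ClassGroup.mk0 Q = g
  · exact ⟨Q, hQ, Q, hQ, hh1, hh1, hsq, fun _ => rfl⟩
  obtain ⟨Q', hQ', hQg⟩ := hcls ((ClassGroup.mk0 Q)⁻¹ * g)
  refine ⟨Q, hQ, Q', hQ', hh1, ?_, by rw [hQg, mul_inv_cancel_left], fun h => ?_⟩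
  · rw [hQg, Ne, inv_mul_eq_one]
    exact hhg
  · exact (hsq (by rw [← eq_inv_mul_iff_mul_eq, ← hQg, ← h])).elim

/-- The prime ideal factors of the principal ideal `(a)`, with multiplicity. -/
noncomputable def idealFactors (a : R) : Multiset (Ideal R) :=
  normalizedFactors (Ideal.span {a})

theorem prod_idealFactors {a : R} (ha : a ≠ 0) : (idealFactors a).prod = Ideal.span {a} :=
  Ideal.prod_normalizedFactors_eq_self (by simpa using ha)

theorem idealFactors_eq_map {a : R} {s : Multiset (Ideal R)⁰} (hs : ∀ P ∈ s, P ∈ specAway f)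
    (h : Ideal.span {a} = (s.prod : Ideal R)) : idealFactors a = s.map (↑) := by
  rw [idealFactors, h, Submonoid.coe_multiset_prod, normalizedFactors_prod_of_prime]
  simpa using fun P hP0 hP => prime_of_mem_specAway (hs ⟨P, hP0⟩ hP)

theorem exists_span_eq_prod_of_idealFactors_subset {v : R} (hv : v ≠ 0) {s : Multiset (Ideal R)⁰}
    (h : idealFactors v ⊆ s.map (↑)) :
    ∃ t ⊆ s, idealFactors v = t.map (↑) ∧ Ideal.span {v} = (t.prod : Ideal R) := by
  obtain ⟨t, ht⟩ : ∃ t : Multiset (Ideal R)⁰, t.map (↑) = idealFactors v := by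
    refine CanLift.prf (idealFactors v) fun I hI => ?_
    obtain ⟨J, -, rfl⟩ := Multiset.mem_map.mp (h hI)
    exact J.2
  refine ⟨t, fun Q hQ => ?_, ht.symm, ?_⟩
  · rw [← Multiset.mem_map_of_injective Subtype.val_injective]
    exact h (ht ▸ Multiset.mem_map_of_mem _ hQ)
  · rw [← prod_idealFactors hv, ← ht, Submonoid.coe_multiset_prod]

theorem idealFactors_congr {a b : R} (h : Associated a b) : idealFactors a = idealFactors b := by
  rw [idealFactors, Ideal.span_singleton_eq_span_singleton.mpr h, idealFactors]

theorem idealFactors_pow (a : R) (n : ℕ) : idealFactors (a ^ n) = n • idealFactors a := by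
  rw [idealFactors, ← Ideal.span_singleton_pow, normalizedFactors_pow, idealFactors]

theorem idealFactors_multiset_prod {t : Multiset R} (ht : 0 ∉ t) :
    idealFactors t.prod = t.bind idealFactors := by
  rw [idealFactors, ← Ideal.multiset_prod_span_singleton, normalizedFactors_multiset_prod,
    Multiset.map_map]
  · rfl
  · simpa using ht

end Dedekind

section Overmonoid

variable {R : Type*} [CommRing R] {H : Submonoid (FractionRing R)}

/-- Elements of `R` that become associated in the submonoid `H` of its quotient field. -/
def AssocOver (H : Submonoid (FractionRing R)) (a b : R) : Prop :=
  AssocIn H (algebraMap R (FractionRing R) a) (algebraMap R (FractionRing R) b)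

namespace AssocOver

theorem refl (a : R) : AssocOver H a a :=
  ⟨1, H.one_mem, ⟨1, H.one_mem, one_mul 1⟩, (mul_one _).symm⟩

theorem trans {a b c : R} (h : AssocOver H a b) (h' : AssocOver H b c) : AssocOver H a c := by
  obtain ⟨ε, hε, ⟨δ, hδ, hεδ⟩, e⟩ := h
  obtain ⟨ε', hε', ⟨δ', hδ', hεδ'⟩, e'⟩ := h'
  refine ⟨ε' * ε, H.mul_mem hε' hε, ⟨δ' * δ, H.mul_mem hδ' hδ, ?_⟩, by rw [e, e', mul_assoc]⟩
  rw [mul_mul_mul_comm, hεδ, hεδ', one_mul]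

theorem mul {a b c d : R} (h : AssocOver H a b) (h' : AssocOver H c d) :
    AssocOver H (a * c) (b * d) := by
  obtain ⟨ε, hε, ⟨δ, hδ, hεδ⟩, e⟩ := h
  obtain ⟨ε', hε', ⟨δ', hδ', hεδ'⟩, e'⟩ := h'
  refine ⟨ε * ε', H.mul_mem hε hε', ⟨δ * δ', H.mul_mem hδ hδ', ?_⟩, ?_⟩
  · rw [mul_mul_mul_comm, hεδ, hεδ', one_mul]
  · rw [map_mul, map_mul, e, e', mul_mul_mul_comm]

theorem pow {a b : R} (h : AssocOver H a b) : ∀ n : ℕ, AssocOver H (a ^ n) (b ^ n)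
  | 0 => by simpa only [pow_zero] using refl 1
  | n + 1 => by simpa only [pow_succ] using (h.pow n).mul h

theorem of_mul_left [IsDomain R] {a b c : R} (hc : c ≠ 0) (h : AssocOver H (c * a) (c * b)) :
    AssocOver H a b := by
  obtain ⟨ε, hε, hu, e⟩ := h
  refine ⟨ε, hε, hu, mul_left_cancel₀ (b := algebraMap R _ a) (a := algebraMap R _ c) ?_ ?_⟩
  · simpa using hc
  · rw [← map_mul, e, map_mul, mul_assoc]

end AssocOver

end Overmonoid

namespace IsTKOvermonoid

variable {R : Type*} [CommRing R] [IsDedekindDomain R] {O : Subring R}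
  {H : Submonoid (FractionRing R)}

-- For a nonzero `c` in the conductor, `c ^ n ∣ c * (c * r) ^ n` in `H` for all `n`; as Krull
-- monoids are completely integrally closed, this forces `c ∣ c * r`.
theorem algebraMap_mem (hH : IsTKOvermonoid O H) (hf : O.conductor ≠ ⊥) {r : R} (hr : r ≠ 0) :
    algebraMap R (FractionRing R) r ∈ H := by
  obtain ⟨c, hc, hc0⟩ := Submodule.exists_mem_ne_zero_of_ne_bot hf
  have mem_H (n : ℕ) : algebraMap R (FractionRing R) (c * r ^ n) ∈ H :=
    hH.incl _ (hc _) (mul_ne_zero hc0 (pow_ne_zero n hr))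
  let y : H := ⟨_, hH.incl c (mem_of_mem_conductor hc) hc0⟩
  let x : H := ⟨_, hH.incl (c * r) (hc r) (mul_ne_zero hc0 hr)⟩
  have hyx : y ∣ x := by
    refine hH.krull.dvd_of_forall_pow_dvd_mul_pow (z := y) fun n => ⟨⟨_, mem_H n⟩, Subtype.ext ?_⟩
    simp only [x, y, Submonoid.coe_mul, SubmonoidClass.coe_pow, map_mul, map_pow]
    ring
  obtain ⟨w, hw⟩ := hyx
  have hcw : algebraMap R (FractionRing R) (c * r) = algebraMap R _ c * w :=
    congrArg Subtype.val hw
  rw [map_mul] at hcw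
  rw [mul_left_cancel₀ (by simpa using hc0) hcw]
  exact w.2

theorem assocOver_of_associated (hH : IsTKOvermonoid O H) (hf : O.conductor ≠ ⊥) {a b : R}
    (h : Associated a b) : AssocOver H a b := by
  obtain ⟨u, rfl⟩ := h.symm
  refine ⟨_, hH.algebraMap_mem hf u.ne_zero, ⟨_, hH.algebraMap_mem hf u⁻¹.ne_zero, ?_⟩,
    map_mul _ _ _⟩
  rw [← map_mul, Units.mul_inv, map_one]

theorem ne_zero_of_assocOver (hH : IsTKOvermonoid O H) {a b : R} (h : AssocOver H a b)
    (hb : b ≠ 0) : a ≠ 0 := by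
  rintro rfl
  obtain ⟨ε, hε, -, e⟩ := h
  have hb' : algebraMap R (FractionRing R) b ≠ 0 := by simpa using hb
  exact mul_ne_zero hb' (hH.nonzero ε hε) (by rw [← e, map_zero])

theorem isUnit_of_assocOver [Finite (R ⧸ O.conductor)] (hH : IsTKOvermonoid O H)
    (hf : O.conductor ≠ ⊥) {a b : R} (hb : b ∈ regularMod O.conductor) (h : AssocOver H a b)
    (ha : IsUnit a) : IsUnit b := by
  obtain ⟨u, rfl⟩ := ha
  obtain ⟨ε, hε, -, e⟩ := h
  have inv_mul : algebraMap R (FractionRing R) b * (ε * algebraMap R _ ↑u⁻¹) = 1 := by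
    rw [← mul_assoc, ← e, ← map_mul, Units.mul_inv, map_one]
  have inv_mem := H.mul_mem hε (hH.algebraMap_mem hf u⁻¹.ne_zero)
  obtain ⟨n, hn, hbn⟩ := RegF.exists_pow_mem hb.2
  obtain ⟨c, -, hc⟩ := hH.t1' (b ^ n) hbn (pow_ne_zero n (nonZeroDivisors.ne_zero hb.1))
    ⟨_, H.pow_mem inv_mem n, by rw [map_pow, ← mul_pow, inv_mul, one_pow]⟩
  exact (isUnit_pow_iff hn).mp (.of_mul_eq_one c hc)

theorem exists_rel_of_assocOver_prod (hH : IsTKOvermonoid O H) (hf : O.conductor ≠ ⊥)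
    {s : Multiset R} (hs : 0 ∉ s) {a : R} (haO : a ∈ O) (ha : a ≠ 0) (h : AssocOver H a s.prod) :
    ∃ t : Multiset R, Associated t.prod a ∧ (∀ v ∈ t, v ∈ O) ∧ t.Rel (AssocOver H) s := by
  induction s using Multiset.induction generalizing a with
  | empty =>
    obtain ⟨ε, -, ⟨δ, hδ, hεδ⟩, e⟩ := h
    obtain ⟨c, -, hc⟩ := hH.t1' a haO ha
      ⟨δ, hδ, by rw [e, Multiset.prod_zero, map_one, one_mul, hεδ]⟩
    exact ⟨0, (associated_one_iff_isUnit.mpr (.of_mul_eq_one c hc)).symm, by simp, .zero⟩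
  | cons b s ih =>
    rw [Multiset.mem_cons, not_or] at hs
    obtain ⟨ε, hε, hεu, e⟩ := h
    have hs0 : s.prod ≠ 0 := Multiset.prod_ne_zero hs.2
    obtain ⟨v, w, hv, hw, rfl, hvb, δ, hδ, ⟨δ', hδ', hδu⟩, hwδ⟩ :=
      hH.t2 a haO ha _ (hH.algebraMap_mem hf (Ne.symm hs.1)) _
        (H.mul_mem (hH.algebraMap_mem hf hs0) hε)
        (by rw [e, Multiset.prod_cons, map_mul, mul_assoc])
    obtain ⟨ε', hε', hεu⟩ := hεu
    have hws : AssocOver H w s.prod :=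
      ⟨ε * δ, H.mul_mem hε hδ, ⟨ε' * δ', H.mul_mem hε' hδ', by
        rw [mul_mul_mul_comm, hεu, hδu, one_mul]⟩, by rw [hwδ, mul_assoc]⟩
    obtain ⟨t, htw, htO, hts⟩ := ih hs.2 hw (right_ne_zero_of_mul ha) hws
    refine ⟨v ::ₘ t, ?_, ?_, .cons hvb hts⟩
    · rw [Multiset.prod_cons]
      exact htw.mul_left v
    · exact Multiset.forall_mem_cons.mpr ⟨hv, htO⟩

section Counting

variable [Finite (R ⧸ O.conductor)]

theorem exists_rel_nsmul (hH : IsTKOvermonoid O H) (hf : O.conductor ≠ ⊥) {a : R}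
    (ha : a ∈ regularMod O.conductor) {s : Multiset R} (hs : 0 ∉ s) (h : AssocOver H a s.prod) :
    ∃ n, n ≠ 0 ∧ ∃ t : Multiset R, (∀ v ∈ t, v ∈ O) ∧ t.Rel (AssocOver H) (n • s) ∧
      (∀ P, P ∈ idealFactors a ↔ ∃ v ∈ t, P ∈ idealFactors v) ∧
      (t.map fun v => Multiset.card (idealFactors v)).sum =
        n * Multiset.card (idealFactors a) := by
  obtain ⟨n, hn, hanO⟩ := RegF.exists_pow_mem ha.2
  have han : a ^ n ≠ 0 := pow_ne_zero n (nonZeroDivisors.ne_zero ha.1)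
  obtain ⟨t, hta, htO, hts⟩ := hH.exists_rel_of_assocOver_prod hf (s := n • s)
    (fun h0 => hs (Multiset.mem_of_mem_nsmul h0)) hanO han
    (by rw [Multiset.prod_nsmul]; exact h.pow n)
  have ht : (0 : R) ∉ t := fun h0 => (hta.ne_zero_iff.mpr han) (Multiset.prod_eq_zero h0)
  have hbind : t.bind idealFactors = n • idealFactors a := by
    rw [← idealFactors_multiset_prod ht, idealFactors_congr hta, idealFactors_pow]
  refine ⟨n, hn, t, htO, hts, fun P => ?_, ?_⟩
  · rw [← Multiset.mem_bind, hbind, Multiset.mem_nsmul, and_iff_right hn]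
  · rw [← Multiset.card_nsmul, ← hbind, Multiset.card_bind, Function.comp_def]

theorem one_le_card_of_assocOver (hH : IsTKOvermonoid O H) (hf : O.conductor ≠ ⊥) {a v : R}
    (ha : a ∈ regularMod O.conductor) (hu : ¬ IsUnit a) (h : AssocOver H v a)
    {t : Multiset (Ideal R)⁰} (hvt : Ideal.span {v} = (t.prod : Ideal R)) :
    1 ≤ Multiset.card t := by
  refine Nat.one_le_iff_ne_zero.mpr fun h0 => hu (hH.isUnit_of_assocOver hf ha h ?_)
  rw [← Ideal.span_singleton_eq_top, hvt, Multiset.card_eq_zero.mp h0, Multiset.prod_zero,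
    OneMemClass.coe_one, Ideal.one_eq_top]

theorem two_le_card_of_assocOver (hH : IsTKOvermonoid O H) (hf : O.conductor ≠ ⊥) {a v : R}
    (ha : a ∈ regularMod O.conductor) (hu : ¬ IsUnit a) (h : AssocOver H v a)
    {t : Multiset (Ideal R)⁰} (hnp : ∀ P ∈ t, ClassGroup.mk0 P ≠ 1)
    (hvt : Ideal.span {v} = (t.prod : Ideal R)) : 2 ≤ Multiset.card t := by
  refine (hH.one_le_card_of_assocOver hf ha hu h hvt).lt_of_ne fun h1 => ?_
  obtain ⟨P, rfl⟩ := Multiset.card_eq_one.mp h1.symm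
  rw [Multiset.prod_singleton] at hvt
  exact hnp P (Multiset.mem_singleton_self P) (mk0_eq_one_of_span_eq hvt)

theorem two_mul_card_le_card (hH : IsTKOvermonoid O H) (hf : O.conductor ≠ ⊥)
    {s : Multiset (Ideal R)⁰} (hs : ∀ P ∈ s, P ∈ specAway O.conductor)
    (hnp : ∀ P ∈ s, ClassGroup.mk0 P ≠ 1) {a : R} (ha : a ∈ regularMod O.conductor)
    (has : Ideal.span {a} = (s.prod : Ideal R)) {l : Multiset R}
    (hl : ∀ b ∈ l, b ∈ regularMod O.conductor ∧ ¬ IsUnit b) (h : AssocOver H a l.prod) :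
    2 * Multiset.card l ≤ Multiset.card s := by
  have hl0 : (0 : R) ∉ l := fun h0 => nonZeroDivisors.ne_zero (hl 0 h0).1.1 rfl
  have hfac := idealFactors_eq_map hs has
  obtain ⟨n, hn, t, -, htl, hmem, hsum⟩ := hH.exists_rel_nsmul hf ha hl0 h
  have two_le : ∀ m ∈ t.map fun v => Multiset.card (idealFactors v), 2 ≤ m := by
    rw [Multiset.forall_mem_map_iff]
    intro v hv
    obtain ⟨b, hb, hvb⟩ := Multiset.exists_mem_of_rel_of_mem htl hv
    obtain ⟨hbreg, hbu⟩ := hl b (Multiset.mem_of_mem_nsmul hb)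
    obtain ⟨u, hus, hvu, hspan⟩ := exists_span_eq_prod_of_idealFactors_subset
      (hH.ne_zero_of_assocOver hvb (nonZeroDivisors.ne_zero hbreg.1))
      fun P hP => hfac ▸ (hmem P).mpr ⟨v, hv, hP⟩
    rw [hvu, Multiset.card_map]
    exact hH.two_le_card_of_assocOver hf hbreg hbu hvb (fun P hP => hnp P (hus hP)) hspan
  have hle := Multiset.card_nsmul_le_sum two_le
  rw [hsum, hfac, Multiset.card_map, Multiset.card_map, Multiset.card_eq_card_of_rel htl,
    Multiset.card_nsmul, smul_eq_mul, mul_assoc, mul_comm _ 2] at hle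
  exact Nat.le_of_mul_le_mul_left hle (Nat.pos_of_ne_zero hn)

theorem exists_mem_card_idealFactors_eq (hH : IsTKOvermonoid O H) (hf : O.conductor ≠ ⊥) {a : R}
    (ha : a ∈ regularMod O.conductor) {P : Ideal R} (hP : P ∈ idealFactors a)
    (hmin : ∀ v, AssocOver H v a → idealFactors v ⊆ idealFactors a →
      Multiset.card (idealFactors a) ≤ Multiset.card (idealFactors v)) :
    ∃ v ∈ O, AssocOver H v a ∧ P ∈ idealFactors v ∧ idealFactors v ⊆ idealFactors a ∧
      Multiset.card (idealFactors v) = Multiset.card (idealFactors a) := by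
  obtain ⟨n, -, t, htO, hts, hmem, hsum⟩ := hH.exists_rel_nsmul hf ha (s := {a})
    (by simpa using (nonZeroDivisors.ne_zero ha.1).symm)
    (by rw [Multiset.prod_singleton]; exact .refl a)
  rw [Multiset.nsmul_singleton, Multiset.rel_replicate_right] at hts
  obtain ⟨hcard, hta⟩ := hts
  have factors_subset (v : R) (hv : v ∈ t) : idealFactors v ⊆ idealFactors a := fun Q hQ =>
    (hmem Q).mpr ⟨v, hv, hQ⟩
  obtain ⟨v, hv, hPv⟩ := (hmem P).mp hP
  refine ⟨v, htO v hv, hta v hv, hPv, factors_subset v hv, ?_⟩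
  by_contra hne
  have hlt : (t.map fun _ => Multiset.card (idealFactors a)).sum <
      (t.map fun w => Multiset.card (idealFactors w)).sum :=
    Multiset.sum_lt_sum (fun w hw => hmin w (hta w hw) (factors_subset w hw))
      ⟨v, hv, (hmin v (hta v hv) (factors_subset v hv)).lt_of_ne (Ne.symm hne)⟩
  rw [hsum, Multiset.map_const', Multiset.sum_replicate, hcard, smul_eq_mul] at hlt
  exact hlt.false

theorem hasGeneratorIn_prod (hH : IsTKOvermonoid O H) (hf : O.conductor ≠ ⊥)
    {s : Multiset (Ideal R)⁰} (hs : ∀ P ∈ s, P ∈ specAway O.conductor)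
    {a : R} (ha : a ∈ regularMod O.conductor) (has : Ideal.span {a} = (s.prod : Ideal R))
    (hmin : ∀ v, AssocOver H v a → ∀ t ⊆ s, Ideal.span {v} = (t.prod : Ideal R) →
      Multiset.card s ≤ Multiset.card t)
    {P : (Ideal R)⁰} (hP : P ∈ s)
    (huniq : ∀ t ⊆ s, P ∈ t → Multiset.card t = Multiset.card s → ClassGroup.mk0 t.prod = 1 →
      t = s) :
    HasGeneratorIn O (s.prod : Ideal R) := by
  have hfac := idealFactors_eq_map hs has
  have exists_multiset {v : R} (hva : AssocOver H v a) (hsub : idealFactors v ⊆ idealFactors a) :=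
    exists_span_eq_prod_of_idealFactors_subset
      (hH.ne_zero_of_assocOver hva (nonZeroDivisors.ne_zero ha.1)) (hfac ▸ hsub)
  obtain ⟨v, hvO, hva, hPv, hsub, hcard⟩ := hH.exists_mem_card_idealFactors_eq hf ha
    (hfac ▸ Multiset.mem_map_of_mem _ hP) fun v hva hsub => by
      obtain ⟨t, hts, hvt, hspan⟩ := exists_multiset hva hsub
      simpa only [hfac, hvt, Multiset.card_map] using hmin v hva t hts hspan
  obtain ⟨t, hts, hvt, hspan⟩ := exists_multiset hva hsub
  rw [hvt, Multiset.mem_map_of_injective Subtype.val_injective] at hPv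
  rw [hvt, hfac, Multiset.card_map, Multiset.card_map] at hcard
  exact huniq t hts hPv hcard (mk0_eq_one_of_span_eq hspan) ▸ ⟨v, hvO, hspan⟩

theorem hasGeneratorIn_of_mk0_eq_one (hH : IsTKOvermonoid O H) (hf : O.conductor ≠ ⊥)
    {P : (Ideal R)⁰} (hP : P ∈ specAway O.conductor) (h : ClassGroup.mk0 P = 1) :
    HasGeneratorIn O (P : Ideal R) := by
  have hs : ∀ Q ∈ ({P} : Multiset (Ideal R)⁰), Q ∈ specAway O.conductor := by simpa using hP
  obtain ⟨a, ha, has⟩ := exists_mem_regularMod_span_eq_prod hs (by simpa using h)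
  have hu := not_isUnit_of_span_eq_prod (Multiset.mem_singleton_self P) hP.1 has
  have := hH.hasGeneratorIn_prod hf hs ha has
    (fun v hva t _ hvt => hH.one_le_card_of_assocOver hf ha hu hva hvt)
    (Multiset.mem_singleton_self P) fun t _ hPt ht _ => by
      obtain ⟨Q, rfl⟩ := Multiset.card_eq_one.mp ht
      rw [Multiset.mem_singleton.mp hPt]
  rwa [Multiset.prod_singleton] at this

theorem hasGeneratorIn_mul (hH : IsTKOvermonoid O H) (hf : O.conductor ≠ ⊥)
    {P Q : (Ideal R)⁰} (hP : P ∈ specAway O.conductor) (hQ : Q ∈ specAway O.conductor)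
    (hcl : ClassGroup.mk0 P * ClassGroup.mk0 Q = 1)
    (hPQ : ClassGroup.mk0 P = ClassGroup.mk0 Q → P = Q) :
    HasGeneratorIn O (P * Q : Ideal R) := by
  by_cases hP1 : ClassGroup.mk0 P = 1
  · have hQ1 : ClassGroup.mk0 Q = 1 := by rwa [hP1, one_mul] at hcl
    exact (hH.hasGeneratorIn_of_mk0_eq_one hf hP hP1).mul
      (hH.hasGeneratorIn_of_mk0_eq_one hf hQ hQ1)
  have hQ1 : ClassGroup.mk0 Q ≠ 1 := fun h => hP1 (by rwa [h, mul_one] at hcl)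
  have hs : ∀ X ∈ ({P, Q} : Multiset (Ideal R)⁰), X ∈ specAway O.conductor := by
    simp [hP, hQ]
  have hnp : ∀ X ∈ ({P, Q} : Multiset (Ideal R)⁰), ClassGroup.mk0 X ≠ 1 := by
    simp [hP1, hQ1]
  have hPs : P ∈ ({P, Q} : Multiset (Ideal R)⁰) := by simp
  obtain ⟨a, ha, has⟩ := exists_mem_regularMod_span_eq_prod hs (by simpa using hcl)
  have hu := not_isUnit_of_span_eq_prod hPs hP.1 has
  have := hH.hasGeneratorIn_prod hf hs ha has
    (fun v hva t ht hvt =>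
      hH.two_le_card_of_assocOver hf ha hu hva (fun X hX => hnp X (ht hX)) hvt)
    hPs fun t hts hPt ht htcl => by
      obtain ⟨t, rfl⟩ := Multiset.exists_cons_of_mem hPt
      obtain ⟨X, rfl⟩ := Multiset.card_eq_one.mp (by simpa using ht)
      have hX : ClassGroup.mk0 X = ClassGroup.mk0 Q := by
        rw [Multiset.prod_cons, Multiset.prod_singleton, map_mul, ← hcl] at htcl
        exact mul_left_cancel htcl
      obtain rfl | rfl : X = P ∨ X = Q := by simpa using hts (show X ∈ P ::ₘ {X} by simp)
      · rw [← hPQ hX]; rfl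
      · rfl
  simpa using this

theorem not_assocOver_sq (hH : IsTKOvermonoid O H) (hf : O.conductor ≠ ⊥)
    (hcls : ∀ c, ∃ P ∈ specAway O.conductor, ClassGroup.mk0 P = c) {X Y Z : (Ideal R)⁰}
    (hs : ∀ P ∈ ({X, Y, Z} : Multiset (Ideal R)⁰), P ∈ specAway O.conductor)
    (hnp : ∀ P ∈ ({X, Y, Z} : Multiset (Ideal R)⁰), ClassGroup.mk0 P ≠ 1) {a b : R}
    (ha : Ideal.span {a} = (X * (Y * Z) : Ideal R)) (hb : Ideal.span {b} = (X * X : Ideal R)) :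
    ¬ AssocOver H b a := by
  intro hba
  have hXYZ := mk0_eq_one_of_span_eq (I := X * (Y * Z)) ha
  have hXX := mk0_eq_one_of_span_eq (I := X * X) hb
  simp only [map_mul] at hXYZ hXX
  simp only [Multiset.insert_eq_cons, Multiset.forall_mem_cons, Multiset.mem_singleton,
    forall_eq] at hs hnp
  obtain ⟨S, hS, hYS, c, hc, hcu, hcs⟩ := exists_mem_regularMod_span_eq_mul hcls hs.2.1
  obtain ⟨T, hT, hZT, d, hd, hdu, hds⟩ := exists_mem_regularMod_span_eq_mul hcls hs.2.2
  have hXST : ClassGroup.mk0 X * (ClassGroup.mk0 S * ClassGroup.mk0 T) = 1 := by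
    rw [hYS, hZT, ← mul_inv, ← eq_inv_of_mul_eq_one_left hXYZ, hXX]
  have hsXST : ∀ P ∈ ({X, S, T} : Multiset (Ideal R)⁰), P ∈ specAway O.conductor := by
    simp [hs, hS, hT]
  obtain ⟨a', ha', ha's⟩ := exists_mem_regularMod_span_eq_prod hsXST (by simpa using hXST)
  have ha0 : a ≠ 0 := by
    rintro rfl
    exact nonZeroDivisors.coe_ne_zero (X * (Y * Z)) (ha.symm.trans Ideal.span_singleton_zero)
  have hassoc : Associated (a * a') (b * (c * d)) := by
    rw [← Ideal.span_singleton_eq_span_singleton]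
    simp only [← Ideal.span_singleton_mul_span_singleton, ha, hb, ha's, hcs, hds,
      Multiset.insert_eq_cons, Multiset.prod_cons, Multiset.prod_singleton, Submonoid.coe_mul]
    ring
  have ha'cd : AssocOver H a' ({c, d} : Multiset R).prod := by
    rw [Multiset.insert_eq_cons, Multiset.prod_cons, Multiset.prod_singleton]
    exact ((hH.assocOver_of_associated hf hassoc).trans (hba.mul (.refl _))).of_mul_left ha0
  have four_le_three := hH.two_mul_card_le_card hf hsXST (by simp [hnp, hYS, hZT]) ha' ha's
    (by simp [hc, hd, hcu, hdu]) ha'cd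
  simp at four_le_three

theorem three_le_card_of_assocOver (hH : IsTKOvermonoid O H) (hf : O.conductor ≠ ⊥)
    (hcls : ∀ c, ∃ P ∈ specAway O.conductor, ClassGroup.mk0 P = c)
    {s : Multiset (Ideal R)⁰} (hs : ∀ P ∈ s, P ∈ specAway O.conductor)
    (hnp : ∀ P ∈ s, ClassGroup.mk0 P ≠ 1) (hcard : Multiset.card s = 3) {a v : R}
    (ha : a ∈ regularMod O.conductor) (has : Ideal.span {a} = (s.prod : Ideal R))
    (hva : AssocOver H v a) {t : Multiset (Ideal R)⁰} (hts : t ⊆ s)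
    (hvt : Ideal.span {v} = (t.prod : Ideal R)) : 3 ≤ Multiset.card t := by
  obtain ⟨P, hP⟩ := Multiset.card_pos_iff_exists_mem.mp (by lia : 0 < Multiset.card s)
  have hu := not_isUnit_of_span_eq_prod hP (hs P hP).1 has
  refine (hH.two_le_card_of_assocOver hf ha hu hva (fun P hP => hnp P (hts hP)) hvt).lt_of_ne
    fun h2 => ?_
  obtain ⟨X, V, rfl⟩ := Multiset.card_eq_two.mp h2.symm
  obtain ⟨s, rfl⟩ := Multiset.exists_cons_of_mem (hts (Multiset.mem_cons_self X {V}))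
  obtain ⟨Y, Z, rfl⟩ := Multiset.card_eq_two.mp (by simpa using hcard)
  have hXYZ := mk0_eq_one_of_span_eq has
  have hXV := mk0_eq_one_of_span_eq hvt
  simp only [Multiset.insert_eq_cons, Multiset.prod_cons, Multiset.prod_singleton, map_mul]
    at hXYZ hXV
  obtain rfl | rfl | rfl : V = X ∨ V = Y ∨ V = Z := by
    simpa using hts (show V ∈ X ::ₘ {V} by simp)
  · exact hH.not_assocOver_sq hf hcls hs hnp (by simpa using has) (by simpa using hvt) hva
  · exact hnp Z (by simp) (by rwa [← mul_assoc, hXV, one_mul] at hXYZ)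
  · exact hnp Y (by simp) (by rwa [mul_left_comm, hXV, mul_one] at hXYZ)

theorem hasGeneratorIn_mul_mul (hH : IsTKOvermonoid O H) (hf : O.conductor ≠ ⊥)
    (hcls : ∀ c, ∃ P ∈ specAway O.conductor, ClassGroup.mk0 P = c) {P Q Q' : (Ideal R)⁰}
    (hs : ∀ X ∈ ({P, Q, Q'} : Multiset (Ideal R)⁰), X ∈ specAway O.conductor)
    (hnp : ∀ X ∈ ({P, Q, Q'} : Multiset (Ideal R)⁰), ClassGroup.mk0 X ≠ 1)
    (hPP : ClassGroup.mk0 P * ClassGroup.mk0 P = 1)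
    (hcl : ClassGroup.mk0 P * (ClassGroup.mk0 Q * ClassGroup.mk0 Q') = 1)
    (hQQ' : ClassGroup.mk0 Q = ClassGroup.mk0 Q' → Q = Q') :
    HasGeneratorIn O (P * (Q * Q') : Ideal R) := by
  obtain ⟨a, ha, has⟩ := exists_mem_regularMod_span_eq_prod hs (by simpa using hcl)
  have := hH.hasGeneratorIn_prod hf hs ha has
    (fun v hva t hts hvt => hH.three_le_card_of_assocOver hf hcls hs hnp rfl ha has hva hts hvt)
    (Multiset.mem_cons_self P _) fun t hts hPt ht htcl => by
      obtain ⟨t, rfl⟩ := Multiset.exists_cons_of_mem hPt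
      obtain ⟨X, Y, rfl⟩ := Multiset.card_eq_two.mp (by simpa using ht)
      simp only [Multiset.insert_eq_cons, Multiset.prod_cons, Multiset.prod_singleton, map_mul]
        at htcl
      have hX : X ∈ ({P, Q, Q'} : Multiset (Ideal R)⁰) := hts (by simp)
      have hY : Y ∈ ({P, Q, Q'} : Multiset (Ideal R)⁰) := hts (by simp)
      have hXP : X ≠ P := by
        rintro rfl
        exact hnp Y hY (by rwa [← mul_assoc, hPP, one_mul] at htcl)
      have hYP : Y ≠ P := by
        rintro rfl
        exact hnp X hX (by rwa [mul_left_comm, hPP, mul_one] at htcl)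
      have hXY : ClassGroup.mk0 X * ClassGroup.mk0 Y = ClassGroup.mk0 Q * ClassGroup.mk0 Q' :=
        mul_left_cancel (htcl.trans hcl.symm)
      replace hX : X = Q ∨ X = Q' := by simpa [hXP] using hX
      replace hY : Y = Q ∨ Y = Q' := by simpa [hYP] using hY
      obtain ⟨rfl | rfl, rfl | rfl⟩ := And.intro hX hY
      · rw [← hQQ' (mul_left_cancel hXY)]; rfl
      · rfl
      · rw [Multiset.pair_comm]; rfl
      · rw [hQQ' (mul_right_cancel hXY).symm]; rfl
  simpa using this

theorem hasGeneratorIn_mul_of_mk0_eq (hH : IsTKOvermonoid O H) (hf : O.conductor ≠ ⊥)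
    (hcls : ∀ c, ∃ P ∈ specAway O.conductor, ClassGroup.mk0 P = c)
    (hcard : Nat.card (ClassGroup R) ≠ 2) {P₁ P₂ : (Ideal R)⁰}
    (h₁ : P₁ ∈ specAway O.conductor) (h₂ : P₂ ∈ specAway O.conductor)
    (heq : ClassGroup.mk0 P₁ = ClassGroup.mk0 P₂)
    (hmul : ClassGroup.mk0 P₁ * ClassGroup.mk0 P₂ = 1) :
    HasGeneratorIn O (P₁ * P₂ : Ideal R) := by
  by_cases hone : ClassGroup.mk0 P₁ = 1
  · exact (hH.hasGeneratorIn_of_mk0_eq_one hf h₁ hone).mul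
      (hH.hasGeneratorIn_of_mk0_eq_one hf h₂ (heq ▸ hone))
  obtain ⟨Q, hQ, Q', hQ', hQ1, hQ'1, hQQ', huniq⟩ := exists_mk0_mul_mk0_eq hcls hcard hone
  have triple {P : (Ideal R)⁰} (hP : P ∈ specAway O.conductor)
      (hPP₁ : ClassGroup.mk0 P = ClassGroup.mk0 P₁) :
      HasGeneratorIn O (P * (Q * Q') : Ideal R) := by
    have hPP : ClassGroup.mk0 P * ClassGroup.mk0 P = 1 := by rw [← hmul, ← heq, hPP₁]
    exact hH.hasGeneratorIn_mul_mul hf hcls (by simp [hP, hQ, hQ'])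
      (by simp [hPP₁, hone, hQ1, hQ'1]) hPP (by rw [hQQ', ← hPP₁, hPP]) huniq
  have square : HasGeneratorIn O (P₂ * P₂ : Ideal R) :=
    hH.hasGeneratorIn_mul hf h₂ h₂ (heq ▸ hmul) fun _ => rfl
  have hcop : IsCoprime (P₂ * (Q * Q') : Ideal R) O.conductor :=
    (isCoprime_of_mem_specAway h₂).mul_left
      ((isCoprime_of_mem_specAway hQ).mul_left (isCoprime_of_mem_specAway hQ'))
  refine (triple h₂ heq.symm).of_mul_left (nonZeroDivisors.coe_ne_zero (P₂ * (Q * Q'))) hcop ?_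
  have exchange : (P₂ * (Q * Q') * (P₁ * P₂) : Ideal R) = P₁ * (Q * Q') * (P₂ * P₂) := by ring
  rw [exchange]
  exact (triple h₁ rfl).mul square

end Counting

end IsTKOvermonoid

theorem inverse_classes_product_in_order_general {R : Type*} [CommRing R] [IsDedekindDomain R]
    {O : Subring R} [Finite (R ⧸ O.conductor)]
    (hcls : ∀ c, ∃ P ∈ specAway O.conductor, ClassGroup.mk0 P = c)
    {H : Submonoid (FractionRing R)} (hH : IsTKOvermonoid O H)
    (hcard : Nat.card (ClassGroup R) ≠ 2) {P₁ P₂ : (Ideal R)⁰}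
    (h₁ : P₁ ∈ specAway O.conductor) (h₂ : P₂ ∈ specAway O.conductor)
    (hcl : ClassGroup.mk0 P₁ = (ClassGroup.mk0 P₂)⁻¹) :
    HasGeneratorIn O (P₁ * P₂ : Ideal R) := by
  have hf : O.conductor ≠ ⊥ := ne_bot_of_finite_quotient
    (Ring.not_isField_iff_exists_prime.mpr ⟨P₁, nonZeroDivisors.coe_ne_zero P₁, h₁.1⟩) _
  have hmul : ClassGroup.mk0 P₁ * ClassGroup.mk0 P₂ = 1 := by rw [hcl, inv_mul_cancel]
  rcases eq_or_ne (ClassGroup.mk0 P₁) (ClassGroup.mk0 P₂) with heq | hne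
  · exact hH.hasGeneratorIn_mul_of_mk0_eq hf hcls hcard h₁ h₂ heq hmul
  · exact hH.hasGeneratorIn_mul hf h₁ h₂ hmul fun h => (hne h).elim

theorem inverse_classes_product_in_order
    {R : Type*} [CommRing R] [IsDomain R] [IsDedekindDomain R]
    (O : Subring R) (hne : O ≠ ⊤) (hfg : Module.Finite ↥O R)
    (hfrac : ∀ r : R, ∃ a b : ↥O, (b : R) ≠ 0 ∧ (b : R) * r = (a : R))
    (htor : ∀ c : ClassGroup R, ∃ n : ℕ, 0 < n ∧ c ^ n = 1)
    (hfin : Finite (R ⧸ O.conductor))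
    (hcls : ∀ c : ClassGroup R, ∃ (P : Ideal R) (hP : P ∈ (Ideal R)⁰),
      P.IsPrime ∧ ¬ O.conductor ≤ P ∧ ClassGroup.mk0 ⟨P, hP⟩ = c)
    (H : Submonoid (FractionRing R)) (hH : IsTKOvermonoid O H)
    (hcard : Nat.card (ClassGroup R) ≠ 2)
    (P₁ P₂ : Ideal R) (h₁ : P₁ ∈ (Ideal R)⁰) (h₂ : P₂ ∈ (Ideal R)⁰)
    (hp₁ : P₁.IsPrime) (hp₂ : P₂.IsPrime)
    (hc₁ : ¬ O.conductor ≤ P₁) (hc₂ : ¬ O.conductor ≤ P₂)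
    (hcl : ClassGroup.mk0 ⟨P₁, h₁⟩ = (ClassGroup.mk0 ⟨P₂, h₂⟩)⁻¹) :
    ∃ b ∈ O, Ideal.span {b} = P₁ * P₂ := by
  exact inverse_classes_product_in_order_general
    (fun c => let ⟨P, hP, hp, hc, h⟩ := hcls c; ⟨⟨P, hP⟩, ⟨hp, hc⟩, h⟩)
    hH hcard (P₁ := ⟨P₁, h₁⟩) (P₂ := ⟨P₂, h₂⟩) ⟨hp₁, hc₁⟩ ⟨hp₂, hc₂⟩ hcl
end

section
/- Under the standing assumptions with |Cl(R)| ≠ 2 and O transfer Krull via a Krull overmonoid H: if a, b ∈ Reg_f(R) are associated in H and a is absolutely irreducible in R, then β(a) = β(b), where β : R^• → B(Cl(R)) is the block homomorphism. -/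
open scoped nonZeroDivisors

variable {R₀ : Type*}

open Classical in
/-- The block homomorphism `β`: sends `a` to the multiset of ideal classes of the primes
dividing `aR`, with multiplicity. -/
noncomputable def blockOf {R : Type*} [CommRing R] [IsDomain R] [IsDedekindDomain R]
    (a : R) : Multiset (ClassGroup R) :=
  (UniqueFactorizationMonoid.normalizedFactors (Ideal.span {a})).map
    (fun I => if h : I ∈ (Ideal R)⁰ then ClassGroup.mk0 ⟨I, h⟩ else 1)

/-!
For a nonzero prime `P` of order `d` in the class group let `p` generate `P ^ d`. Every divisor of a
power of `p` is, up to units, a power of `p`, and the transfer property of `H` turns this into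
unique factorization: an element that is associated in `H` to a product of such generators
determines their classes in `H`. Passing to a suitable power, every element regular modulo the
conductor is such a product, so letting `P` count `1 / d` towards the class of `p` gives a weight
that is invariant under association in `H`.

The transfer property also allows the primes of a zero-sum sequence to be exchanged for primes whose
generators have the same classes in `H`, keeping the weight. Comparing weights in short zero-sum
sequences shows that primes with generators associated in `H` have the same ideal class unless the
class group has order `2`. An absolutely irreducible `a` is a generator `p`, so every regular `b`
associated to it in `H` is divisible only by primes in the class of `P`, and by weight there are `d`
of them: both blocks are `[P] ^ d`.
-/

section FractionalWeights

variable {ι G E : Type*} [CommGroup G] {g : ι → G} {κ : ι → E}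
  {s : Multiset ι} {A B C : ι} {e : E}

open Classical in
/-- The weight at `e` of a multiset of primes `A` with ideal class `g A` and generator class `κ A`.
The prime `A` counts `1 / orderOf (g A)`, because `A ^ orderOf (g A)` is its smallest principal
power and the generator of that power is to have weight `1`. -/
noncomputable def classWeight (g : ι → G) (κ : ι → E) (s : Multiset ι) (e : E) : ℚ≥0 :=
  (s.map fun A => if κ A = e then (orderOf (g A) : ℚ≥0)⁻¹ else 0).sum

open Classical in
theorem classWeight_cons (A : ι) (s : Multiset ι) (e : E) :
    classWeight g κ (A ::ₘ s) e =
      (if κ A = e then (orderOf (g A) : ℚ≥0)⁻¹ else 0) + classWeight g κ s e := by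
  simp only [classWeight, Multiset.map_cons, Multiset.sum_cons]

theorem classWeight_add (s t : Multiset ι) (e : E) :
    classWeight g κ (s + t) e = classWeight g κ s e + classWeight g κ t e := by
  simp only [classWeight, Multiset.map_add, Multiset.sum_add]

open Classical in
theorem classWeight_eq_countP_div {d : ℕ} (hs : ∀ A ∈ s, κ A = e → orderOf (g A) = d) :
    classWeight g κ s e = s.countP (κ · = e) / d := by
  induction s using Multiset.induction_on with
  | empty => simp [classWeight]
  | cons A s ih =>
    obtain ⟨hA, hs⟩ := Multiset.forall_mem_cons.1 hs
    rw [classWeight_cons, ih hs, Multiset.countP_cons]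
    split_ifs with h
    · rw [hA h, Nat.cast_add, Nat.cast_one, add_comm, add_div, one_div]
    · rw [zero_add, add_zero]

open Classical in
theorem classWeight_replicate (n : ℕ) (A : ι) (e : E) :
    classWeight g κ (Multiset.replicate n A) e =
      if κ A = e then (n : ℚ≥0) / orderOf (g A) else 0 := by
  rw [classWeight, Multiset.map_replicate, Multiset.sum_replicate, smul_ite, smul_zero,
    nsmul_eq_mul, div_eq_mul_inv]

theorem classWeight_pair (hA : κ A = e) (hB : κ B ≠ e) :
    classWeight g κ {A, B} e = (orderOf (g A) : ℚ≥0)⁻¹ := by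
  classical
  simp [classWeight, hA, hB]

theorem eq_of_classWeight_eq_zero (hG : IsMulTorsion G)
    (hs : ∀ e' ≠ e, classWeight g κ s e' = 0) (hA : A ∈ s) : κ A = e := by
  classical
  by_contra hAe
  have hA0 := Multiset.sum_eq_zero_iff.1 (hs _ hAe) _ (Multiset.mem_map_of_mem _ hA)
  rw [if_pos rfl, inv_eq_zero, Nat.cast_eq_zero] at hA0
  exact (hG (g A)).orderOf_pos.ne' hA0

theorem exists_map_eq_map {T : Set ι} (hT : ∀ A ∈ s, ∃ B ∈ T, κ B = κ A) :
    ∃ u : Multiset ι, (∀ B ∈ u, B ∈ T) ∧ u.map κ = s.map κ := by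
  induction s using Multiset.induction_on with
  | empty => exact ⟨0, by simp, rfl⟩
  | cons A s ih =>
    obtain ⟨⟨B, hB, hBA⟩, hs⟩ := Multiset.forall_mem_cons.1 hT
    obtain ⟨u, hu, hus⟩ := ih hs
    exact ⟨B ::ₘ u, Multiset.forall_mem_cons.2 ⟨hB, hu⟩, by simp [hBA, hus]⟩

/-- Any zero-sum multiset `s` can be exchanged for a zero-sum multiset of the same weight that is
supported on a prescribed set `T`, provided `T` contains a prime of the generator class of each
member of `s`. -/
def HasExchange (g : ι → G) (κ : ι → E) : Prop :=
  ∀ (s : Multiset ι) (T : Set ι), (s.map g).prod = 1 → (∀ A ∈ s, ∃ B ∈ T, κ B = κ A) →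
    ∃ t : Multiset ι, (∀ B ∈ t, B ∈ T) ∧ (t.map g).prod = 1 ∧
      ∀ e, classWeight g κ t e = classWeight g κ s e

namespace HasExchange

theorem exists_classWeight_eq_natCast (h : HasExchange g κ) (hG : IsMulTorsion G)
    (hs : (s.map g).prod = 1) (hsB : ∀ A ∈ s, κ A = κ B) :
    ∃ n : ℕ, classWeight g κ s (κ B) = n := by
  obtain ⟨t, htB, ht, hw⟩ := h s {B} hs fun A hA => ⟨B, rfl, (hsB A hA).symm⟩
  obtain ⟨i, rfl⟩ : ∃ i, t = Multiset.replicate i B := ⟨_, Multiset.eq_replicate.2 ⟨rfl, htB⟩⟩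
  rw [Multiset.map_replicate, Multiset.prod_replicate] at ht
  obtain ⟨n, rfl⟩ := orderOf_dvd_of_pow_eq_one ht
  have hB : (orderOf (g B) : ℚ≥0) ≠ 0 := Nat.cast_ne_zero.2 (hG _).orderOf_pos.ne'
  exact ⟨n, by rw [← hw, classWeight_replicate, if_pos rfl, Nat.cast_mul,
    mul_div_cancel_left₀ _ hB]⟩

theorem exists_pow_mul_pow_eq_one (h : HasExchange g κ) (hBC : κ B ≠ κ C)
    (hs : (s.map g).prod = 1) (hsBC : ∀ A ∈ s, κ A = κ B ∨ κ A = κ C) :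
    ∃ i j : ℕ, g B ^ i * g C ^ j = 1 ∧ classWeight g κ s (κ B) = i / orderOf (g B) ∧
      classWeight g κ s (κ C) = j / orderOf (g C) := by
  classical
  obtain ⟨t, htBC, ht, hw⟩ := h s {B, C} hs fun A hA =>
    (hsBC A hA).elim (fun hAB => ⟨B, .inl rfl, hAB.symm⟩) fun hAC => ⟨C, .inr rfl, hAC.symm⟩
  obtain ⟨i, j, rfl⟩ : ∃ i j, t = Multiset.replicate i B + Multiset.replicate j C := by
    refine ⟨t.count B, (t.filter (· ≠ B)).card, ?_⟩
    rw [← Multiset.filter_eq', ← Multiset.eq_replicate_card.2 fun D hD => ?_,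
      Multiset.filter_add_not]
    exact (htBC D (Multiset.mem_of_mem_filter hD)).resolve_left (Multiset.mem_filter.1 hD).2
  refine ⟨i, j, by simpa using ht, ?_, ?_⟩ <;>
    simp [← hw, classWeight_add, classWeight_replicate, hBC, hBC.symm]

theorem orderOf_dvd_two_or_eq_pow (h : HasExchange g κ) (hG : IsMulTorsion G)
    (hg : Function.Surjective g) (hAB : κ A = κ B) :
    orderOf (g A) ∣ 2 ∨ ∃ i, g A = g B ^ i ∧ i * orderOf (g A) = orderOf (g B) := by
  obtain ⟨C, hC⟩ := hg (g A)⁻¹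
  have hs : (Multiset.map g {A, C}).prod = 1 := by simp [hC]
  have hord : orderOf (g C) = orderOf (g A) := by rw [hC, orderOf_inv]
  have hA₀ : (orderOf (g A) : ℚ≥0) ≠ 0 := Nat.cast_ne_zero.2 (hG _).orderOf_pos.ne'
  have hB₀ : (orderOf (g B) : ℚ≥0) ≠ 0 := Nat.cast_ne_zero.2 (hG _).orderOf_pos.ne'
  rcases eq_or_ne (κ C) (κ A) with hCA | hCA
  · obtain ⟨n, hn⟩ := h.exists_classWeight_eq_natCast (B := A) hG hs (by simp [hCA])
    have hw : classWeight g κ {A, C} (κ A) = 2 * (orderOf (g A) : ℚ≥0)⁻¹ := by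
      simp [classWeight, hCA, hord, two_mul]
    rw [hw, ← div_eq_mul_inv, div_eq_iff hA₀] at hn
    exact .inl ⟨n, by rw [mul_comm]; exact_mod_cast hn⟩
  · obtain ⟨i, j, hij, hwB, hwC⟩ :=
      h.exists_pow_mul_pow_eq_one (hAB ▸ hCA.symm) hs (by simp [hAB])
    rw [← hAB, classWeight_pair rfl hCA, inv_eq_one_div, div_eq_div_iff hA₀ hB₀, one_mul] at hwB
    rw [Multiset.pair_comm, classWeight_pair rfl hCA.symm, hord, inv_eq_one_div,
      div_left_inj' hA₀] at hwC
    obtain rfl : 1 = j := by exact_mod_cast hwC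
    rw [pow_one, hC, mul_inv_eq_one] at hij
    exact .inr ⟨i, hij.symm, by exact_mod_cast hwB.symm⟩

theorem eq_of_orderOf_eq_two (h : HasExchange g κ) (hG : IsMulTorsion G)
    (hg : Function.Surjective g) (hAB : κ A = κ B) (hA : orderOf (g A) = 2)
    (hB : orderOf (g B) = 2) : g A = g B := by
  by_contra hne
  obtain ⟨C, hC⟩ := hg (g A * g B)⁻¹
  have hs : (Multiset.map g {A, B, C}).prod = 1 := by simp [hC, ← mul_assoc]
  have hA2 : g A ^ 2 = 1 := hA ▸ pow_orderOf_eq_one _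
  have hB2 : g B ^ 2 = 1 := hB ▸ pow_orderOf_eq_one _
  have hC1 : g C ≠ 1 := by
    rwa [hC, inv_ne_one, Ne, mul_eq_one_iff_eq_inv, inv_eq_of_mul_eq_one_left (sq (g B) ▸ hB2)]
  have hCord : orderOf (g C) = 2 :=
    orderOf_eq_prime (by rw [hC, inv_pow, mul_pow, hA2, hB2, one_mul, inv_one]) hC1
  rcases eq_or_ne (κ C) (κ B) with hCB | hCB
  · obtain ⟨n, hn⟩ := h.exists_classWeight_eq_natCast (B := B) hG hs (by simp [hAB, hCB])
    have hw : classWeight g κ {A, B, C} (κ B) = 3 / 2 := by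
      have h3 : (2 : ℚ≥0)⁻¹ + (2⁻¹ + 2⁻¹) = 3 / 2 := by norm_num
      simp [classWeight, hAB, hCB, hA, hB, hCord, h3]
    rw [hn, eq_div_iff two_ne_zero] at hw
    have : n * 2 = 3 := by exact_mod_cast hw
    lia
  · obtain ⟨i, j, hij, hwB, hwC⟩ := h.exists_pow_mul_pow_eq_one hCB.symm hs (by simp [hAB])
    have hwB' : classWeight g κ {A, B, C} (κ B) = 1 := by
      simp [classWeight, hAB, hCB, hA, hB, ← two_mul]
    have hwC' : classWeight g κ {A, B, C} (κ C) = 1 / 2 := by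
      simp [classWeight, hAB, hCB.symm, hCord]
    rw [hwB', hB, Nat.cast_two, eq_div_iff two_ne_zero, one_mul] at hwB
    rw [hwC', hCord, Nat.cast_two, div_left_inj' two_ne_zero] at hwC
    obtain rfl : 2 = i := by exact_mod_cast hwB
    obtain rfl : 1 = j := by exact_mod_cast hwC
    rw [hB2, one_mul, pow_one] at hij
    exact hC1 hij

theorem eq_one_or_eq_of_orderOf (h : HasExchange g κ) (hG : IsMulTorsion G)
    (hg : Function.Surjective g) (hA : g A = 1) (hB : orderOf (g B) = 2) (hAB : κ A = κ B)
    (hCA : κ C = κ A) : g C = 1 ∨ g C = g B := by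
  rcases h.orderOf_dvd_two_or_eq_pow hG hg hCA with hC | ⟨i, hi, -⟩
  · rcases (Nat.dvd_prime Nat.prime_two).1 hC with hC | hC
    · exact .inl (orderOf_eq_one_iff.1 hC)
    · exact .inr (h.eq_of_orderOf_eq_two hG hg (hCA.trans hAB) hC hB)
  · exact .inl (by rw [hi, hA, one_pow])

-- Classes `x`, `y` with `g B * x * y = 1` that avoid `1` and `g B` give a zero-sum triple of weight
-- `1 / 2` at `κ B`; replacing `B` by the principal prime `A` would make that weight an integer.
theorem orderOf_ne_two_of_eq_one (h : HasExchange g κ) (hG : IsMulTorsion G)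
    (hg : Function.Surjective g) (hcard : Nat.card G ≠ 2) (hA : g A = 1) (hAB : κ A = κ B) :
    orderOf (g B) ≠ 2 := by
  classical
  intro hB
  have hB1 : g B ≠ 1 := fun hB1 => by simp [hB1] at hB
  obtain ⟨x, hx, hxB⟩ : ∃ x, x ≠ 1 ∧ x ≠ g B := by
    by_contra! hx
    exact hcard ((Nat.card_eq_two_iff' 1).2 ⟨g B, hB1, hx⟩)
  obtain ⟨K, rfl⟩ := hg x
  obtain ⟨L, hL⟩ := hg (g B * g K)⁻¹
  have hclass : ∀ {D}, κ D = κ A → g D = 1 ∨ g D = g B :=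
    h.eq_one_or_eq_of_orderOf hG hg hA hB hAB
  have hBB : (g B)⁻¹ = g B := inv_eq_of_mul_eq_one_left (sq (g B) ▸ hB ▸ pow_orderOf_eq_one _)
  have hKA : κ K ≠ κ A := fun hKA => (hclass hKA).elim hx hxB
  have hLA : κ L ≠ κ A := fun hLA => by
    rcases hclass hLA with hL1 | hLB
    · rw [hL, inv_eq_one, mul_eq_one_iff_inv_eq, hBB] at hL1
      exact hxB hL1.symm
    · rw [hL, mul_inv, hBB, mul_eq_left, inv_eq_one] at hLB
      exact hx hLB
  obtain ⟨t, htT, -, hw⟩ := h {B, K, L} {A, K, L} (by simp [hL, ← mul_assoc]) (by simp [hAB])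
  have hwt : classWeight g κ t (κ A) = t.countP (κ · = κ A) / (1 : ℕ) := by
    refine classWeight_eq_countP_div fun D hD hDA => ?_
    rcases htT D hD with rfl | rfl | rfl
    exacts [orderOf_eq_one_iff.2 hA, absurd hDA hKA, absurd hDA hLA]
  have hws : classWeight g κ {B, K, L} (κ A) = 1 / 2 := by
    simp [classWeight, hAB.symm, hB, hKA, hLA]
  rw [hw, hws, Nat.cast_one, div_one, div_eq_iff two_ne_zero] at hwt
  have : 1 = t.countP (κ · = κ A) * 2 := by exact_mod_cast hwt
  lia

theorem eq_of_orderOf_dvd_two (h : HasExchange g κ) (hG : IsMulTorsion G)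
    (hg : Function.Surjective g) (hcard : Nat.card G ≠ 2) (hAB : κ A = κ B)
    (hA : orderOf (g A) ∣ 2) (hB : orderOf (g B) ∣ 2) : g A = g B := by
  rcases (Nat.dvd_prime Nat.prime_two).1 hA with hA | hA <;>
    rcases (Nat.dvd_prime Nat.prime_two).1 hB with hB | hB
  · rw [orderOf_eq_one_iff.1 hA, orderOf_eq_one_iff.1 hB]
  · exact (h.orderOf_ne_two_of_eq_one hG hg hcard (orderOf_eq_one_iff.1 hA) hAB hB).elim
  · exact (h.orderOf_ne_two_of_eq_one hG hg hcard (orderOf_eq_one_iff.1 hB) hAB.symm hA).elim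
  · exact h.eq_of_orderOf_eq_two hG hg hAB hA hB

theorem eq_of_eq (h : HasExchange g κ) (hG : IsMulTorsion G) (hg : Function.Surjective g)
    (hcard : Nat.card G ≠ 2) (hAB : κ A = κ B) : g A = g B := by
  rcases h.orderOf_dvd_two_or_eq_pow hG hg hAB with hA | ⟨i, hi, hiB⟩ <;>
    rcases h.orderOf_dvd_two_or_eq_pow hG hg hAB.symm with hB | ⟨j, hj, hjA⟩
  · exact h.eq_of_orderOf_dvd_two hG hg hcard hAB hA hB
  · exact h.eq_of_orderOf_dvd_two hG hg hcard hAB hA ((Dvd.intro_left j hjA).trans hA)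
  · exact h.eq_of_orderOf_dvd_two hG hg hcard hAB ((Dvd.intro_left i hiB).trans hB) hB
  · have hord : orderOf (g A) = orderOf (g B) :=
      Nat.dvd_antisymm (Dvd.intro_left i hiB) (Dvd.intro_left j hjA)
    obtain rfl : i = 1 := by
      rwa [hord, Nat.mul_eq_right (hG _).orderOf_pos.ne'] at hiB
    rwa [pow_one] at hi

end HasExchange

end FractionalWeights

section PrimeGenerators

open IsDedekindDomain

variable {R : Type*} [CommRing R] {P Q : HeightOneSpectrum R} {x : R}

theorem exists_heightOneSpectrum_mem (hx : x ≠ 0) (hx' : ¬ IsUnit x) :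
    ∃ P : HeightOneSpectrum R, x ∈ P.asIdeal := by
  obtain ⟨I, hI, hxI⟩ := exists_max_ideal_of_mem_nonunits hx'
  exact ⟨⟨I, hI.isPrime, fun h => hx (by simpa [h] using hxI)⟩, hxI⟩

variable [IsDedekindDomain R]

/-- The ideal class of a nonzero prime. -/
noncomputable def primeClass (P : HeightOneSpectrum R) : ClassGroup R :=
  ClassGroup.mk0 ⟨P.asIdeal, mem_nonZeroDivisors_of_ne_zero P.ne_bot⟩

theorem prod_primeClass_eq_one_iff (s : Multiset (HeightOneSpectrum R)) :
    (s.map primeClass).prod = 1 ↔ ∃ v, Ideal.span {v} = (s.map HeightOneSpectrum.asIdeal).prod := by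
  let I (P : HeightOneSpectrum R) : (Ideal R)⁰ :=
    ⟨P.asIdeal, mem_nonZeroDivisors_of_ne_zero P.ne_bot⟩
  have hclass : (s.map primeClass).prod = ClassGroup.mk0 (s.map I).prod := by
    rw [map_multiset_prod, Multiset.map_map]
    rfl
  have hideal : ((s.map I).prod : Ideal R) = (s.map HeightOneSpectrum.asIdeal).prod := by
    rw [Submonoid.coe_multiset_prod, Multiset.map_map]
    rfl
  rw [hclass, ClassGroup.mk0_eq_one_iff, hideal]
  exact ⟨fun h => ⟨_, h.principal.choose_spec.symm⟩, fun ⟨v, hv⟩ => ⟨v, hv.symm⟩⟩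

theorem exists_span_eq_pow_orderOf (P : HeightOneSpectrum R) :
    ∃ p : R, Ideal.span {p} = P.asIdeal ^ orderOf (primeClass P) := by
  simpa using (prod_primeClass_eq_one_iff (Multiset.replicate (orderOf (primeClass P)) P)).1
    (by simp [pow_orderOf_eq_one])

/-- A chosen generator of the smallest principal power of the prime `P`. -/
noncomputable def primeGen (P : HeightOneSpectrum R) : R :=
  (exists_span_eq_pow_orderOf P).choose

theorem span_primeGen (P : HeightOneSpectrum R) :
    Ideal.span {primeGen P} = P.asIdeal ^ orderOf (primeClass P) :=
  (exists_span_eq_pow_orderOf P).choose_spec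

theorem primeGen_ne_zero (P : HeightOneSpectrum R) : primeGen P ≠ 0 := by
  rw [Ne, ← Ideal.span_singleton_eq_bot, span_primeGen]
  exact pow_ne_zero _ P.ne_bot

theorem primeGen_dvd_pow (hx : x ∈ P.asIdeal) : primeGen P ∣ x ^ orderOf (primeClass P) := by
  rw [← Ideal.mem_span_singleton, span_primeGen]
  exact Ideal.pow_mem_pow hx _

theorem eq_of_primeGen_mem (h : primeGen Q ∈ P.asIdeal) : P = Q := by
  rw [← Ideal.span_singleton_le_iff_mem, span_primeGen] at h
  exact HeightOneSpectrum.ext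
    (Q.isMaximal.eq_of_le P.isPrime.ne_top (P.isPrime.le_of_pow_le h)).symm

theorem mem_of_prod_primeGen_pow_mem {u : Multiset (HeightOneSpectrum R)} {n : ℕ}
    (h : (u.map primeGen).prod ^ n ∈ P.asIdeal) : P ∈ u := by
  obtain ⟨_, hp, hpP⟩ :=
    (P.isPrime.multiset_prod_mem_iff_exists_mem _).1 (P.isPrime.mem_of_pow_mem _ h)
  obtain ⟨Q, hQ, rfl⟩ := Multiset.mem_map.1 hp
  rwa [eq_of_primeGen_mem hpP]

theorem exists_associated_primeGen_pow_of_dvd {N : ℕ} (hx : x ∣ primeGen P ^ N) :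
    ∃ i, Associated x (primeGen P ^ i) := by
  rw [← Ideal.span_singleton_le_span_singleton, ← Ideal.dvd_iff_le, ← Ideal.span_singleton_pow,
    span_primeGen, ← pow_mul, dvd_prime_pow P.prime] at hx
  obtain ⟨k, -, hk⟩ := hx
  rw [associated_iff_eq] at hk
  obtain ⟨i, rfl⟩ : orderOf (primeClass P) ∣ k := by
    refine orderOf_dvd_of_pow_eq_one ?_
    simpa using (prod_primeClass_eq_one_iff (Multiset.replicate k P)).2 ⟨x, by simpa using hk⟩
  rw [pow_mul, ← span_primeGen, Ideal.span_singleton_pow] at hk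
  exact ⟨i, Ideal.span_singleton_eq_span_singleton.1 hk⟩

theorem irreducible_primeGen (hP : IsOfFinOrder (primeClass P)) : Irreducible (primeGen P) := by
  refine ⟨fun h => ?_, fun x y hxy => ?_⟩
  · rw [← Ideal.span_singleton_eq_top, span_primeGen] at h
    exact P.isPrime.ne_top (top_le_iff.1 (h ▸ Ideal.pow_le_self hP.orderOf_pos.ne'))
  · obtain ⟨i, hi⟩ := exists_associated_primeGen_pow_of_dvd (x := x) (P := P) (N := 1)
      ⟨y, by rw [pow_one, hxy]⟩
    rcases i.eq_zero_or_pos with rfl | hpos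
    · exact .inl (associated_one_iff_isUnit.1 (by simpa using hi))
    · have hass : Associated (primeGen P) x :=
        associated_of_dvd_dvd ((dvd_pow_self _ hpos.ne').trans hi.symm.dvd) ⟨y, hxy⟩
      have hx0 : x ≠ 0 := left_ne_zero_of_mul (hxy ▸ primeGen_ne_zero P)
      exact .inr (isUnit_of_associated_mul (hxy ▸ hass) hx0)

theorem exists_associated_primeGen {a : R} (ha : AbsolutelyIrreducible a)
    (htor : IsMulTorsion (ClassGroup R)) :
    ∃ P : HeightOneSpectrum R, Associated (primeGen P) a := by
  obtain ⟨P, hP⟩ := exists_heightOneSpectrum_mem ha.1.ne_zero ha.1.not_isUnit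
  have hpos : 0 < orderOf (primeClass P) := (htor _).orderOf_pos
  obtain ⟨c, hc⟩ := primeGen_dvd_pow hP
  have hc0 : c ≠ 0 := right_ne_zero_of_mul (hc ▸ pow_ne_zero _ ha.1.ne_zero)
  obtain ⟨f, hf, u, hu⟩ := WfDvdMonoid.exists_factors c hc0
  have hrel := ha.2 _ hpos ((primeGen P * u) ::ₘ f) (Multiset.replicate _ a)
    (Multiset.forall_mem_cons.2
      ⟨(irreducible_mul_units u).2 (irreducible_primeGen (htor _)), hf⟩)
    (fun x hx => Multiset.eq_of_mem_replicate hx ▸ ha.1)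
    (by rw [Multiset.prod_cons, hc, ← hu]; ring) (Multiset.prod_replicate _ _)
  have hass := (Multiset.rel_replicate_right.1 hrel).2 _ (Multiset.mem_cons_self _ _)
  exact ⟨P, (associated_mul_unit_right _ _ u.isUnit).trans hass⟩

theorem exists_prod_asIdeal_eq {I : Ideal R} (hI : I ≠ ⊥) :
    ∃ s : Multiset (HeightOneSpectrum R), (s.map HeightOneSpectrum.asIdeal).prod = I := by
  induction I using UniqueFactorizationMonoid.induction_on_prime with
  | h₁ => exact (hI rfl).elim
  | h₂ I hunit => exact ⟨0, by simpa using (Ideal.isUnit_iff.1 hunit).symm⟩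
  | h₃ I p hI' hp ih =>
    obtain ⟨s, hs⟩ := ih hI'
    exact ⟨⟨p, Ideal.isPrime_of_prime hp, hp.ne_zero⟩ ::ₘ s, by simp [hs]⟩

theorem blockOf_eq_map {s : Multiset (HeightOneSpectrum R)}
    (hs : Ideal.span {x} = (s.map HeightOneSpectrum.asIdeal).prod) :
    blockOf x = s.map primeClass := by
  have hfac : UniqueFactorizationMonoid.normalizedFactors (Ideal.span {x}) =
      s.map HeightOneSpectrum.asIdeal := by
    rw [hs]
    refine UniqueFactorizationMonoid.normalizedFactors_prod_of_prime fun I hI => ?_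
    obtain ⟨P, -, rfl⟩ := Multiset.mem_map.1 hI
    exact P.prime
  rw [blockOf, hfac, Multiset.map_map]
  exact Multiset.map_congr rfl fun P _ => dif_pos (mem_nonZeroDivisors_of_ne_zero P.ne_bot)

end PrimeGenerators

section TransferQuotient

open IsDedekindDomain

variable {R Q : Type*} [CommRing R] [CommMonoid Q] {S : Submonoid R} {φ : R →* Q}

/-- A homomorphism `φ` that behaves on the divisor-closed submonoid `S` like the passage from `R^•`
to associate classes in a Krull overmonoid `H` of an order of `R`, where `S` consists of the
elements regular modulo the conductor. The field `exists_lift` is the transfer property of `H`,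
transported to `S`. -/
structure IsTransferQuotient (S : Submonoid R) (φ : R →* Q) : Prop where
  mem_of_dvd : ∀ {x y : R}, x ∣ y → y ∈ S → x ∈ S
  ne_zero : ∀ {x : R}, x ∈ S → x ≠ 0
  map_eq_one_iff : ∀ {x : R}, x ∈ S → (φ x = 1 ↔ IsUnit x)
  map_left_cancel : ∀ {x y z : R}, z ∈ S → φ z * φ x = φ z * φ y → φ x = φ y
  exists_lift : ∀ {x y c : R}, x ∈ S → y ∈ S → c ∈ S → φ (x * y) = φ c →
    ∃ v N, v ∣ c ^ N ∧ φ v = φ x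

theorem IsTransferQuotient.map_eq_of_associated (h : IsTransferQuotient S φ) {x y : R}
    (hxy : Associated x y) : φ x = φ y := by
  obtain ⟨u, rfl⟩ := hxy
  have hu : φ u = 1 := (h.map_eq_one_iff (h.mem_of_dvd u.isUnit.dvd S.one_mem)).2 u.isUnit
  rw [map_mul, hu, mul_one]

variable [IsDedekindDomain R]

/-- The nonzero primes whose smallest principal power has a generator in `S`; for a divisor-closed
`S` these are the prime divisors of the elements of `S`. -/
abbrev RegularPrime (S : Submonoid R) : Type _ :=
  {P : HeightOneSpectrum R // primeGen P ∈ S}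

namespace RegularPrime

/-- The prime, as an ideal. -/
abbrev asIdeal (A : RegularPrime S) : Ideal R := A.1.asIdeal

/-- The ideal class of the prime. -/
noncomputable abbrev cls (A : RegularPrime S) : ClassGroup R := primeClass A.1

/-- The chosen generator of the smallest principal power of the prime. -/
noncomputable abbrev gen (A : RegularPrime S) : R := primeGen A.1

theorem prod_cls_eq_one_iff (s : Multiset (RegularPrime S)) :
    (s.map cls).prod = 1 ↔ ∃ v, Ideal.span {v} = (s.map asIdeal).prod := by
  have h := prod_primeClass_eq_one_iff (s.map Subtype.val)
  rwa [Multiset.map_map, Multiset.map_map] at h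

theorem blockOf_eq_map_cls {s : Multiset (RegularPrime S)} {x : R}
    (hs : Ideal.span {x} = (s.map asIdeal).prod) : blockOf x = s.map cls := by
  rw [blockOf_eq_map (s := s.map Subtype.val) (by rwa [Multiset.map_map]), Multiset.map_map]
  rfl

theorem mem_asIdeal_of_mem {s : Multiset (RegularPrime S)} {x : R} {A : RegularPrime S}
    (hs : Ideal.span {x} = (s.map asIdeal).prod) (hA : A ∈ s) : x ∈ A.asIdeal := by
  rw [← Ideal.dvd_span_singleton, hs]
  exact Multiset.dvd_prod (Multiset.mem_map_of_mem _ hA)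

theorem mem_of_prod_gen_pow_mem {u : Multiset (RegularPrime S)} {n : ℕ} {A : RegularPrime S}
    (h : (u.map gen).prod ^ n ∈ A.asIdeal) : A ∈ u := by
  have hA : A.1 ∈ u.map Subtype.val :=
    mem_of_prod_primeGen_pow_mem (n := n) (by rwa [Multiset.map_map])
  rwa [Multiset.mem_map_of_injective Subtype.val_injective] at hA

theorem prod_gen_mem (s : Multiset (RegularPrime S)) : (s.map gen).prod ∈ S :=
  S.multiset_prod_mem _ fun _ hx => by
    obtain ⟨A, -, rfl⟩ := Multiset.mem_map.1 hx
    exact A.2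

theorem exists_forall_orderOf_dvd (htor : IsMulTorsion (ClassGroup R))
    (s : Multiset (RegularPrime S)) : ∃ N, 0 < N ∧ ∀ A ∈ s, orderOf A.cls ∣ N := by
  refine ⟨(s.map fun A => orderOf A.cls).prod, Nat.pos_of_ne_zero ?_, fun A hA =>
    Multiset.dvd_prod (Multiset.mem_map_of_mem _ hA)⟩
  simp [Multiset.prod_eq_zero_iff, ((htor _).orderOf_pos).ne']

theorem map_prod_gen (φ : R →* Q) (s : Multiset (RegularPrime S)) :
    φ (s.map gen).prod = (s.map (φ ∘ gen)).prod := by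
  rw [map_multiset_prod, Multiset.map_map]

/-- The primes `A` for which the generators `A.gen` multiply to a generator of the `N`-th power of
the ideal `∏ A ∈ s, A`, when `N` is a multiple of the orders of all classes involved. -/
noncomputable def expand (N : ℕ) (s : Multiset (RegularPrime S)) : Multiset (RegularPrime S) :=
  s.bind fun A => Multiset.replicate (N / orderOf A.cls) A

theorem expand_cons (N : ℕ) (A : RegularPrime S) (s : Multiset (RegularPrime S)) :
    expand N (A ::ₘ s) = Multiset.replicate (N / orderOf A.cls) A + expand N s :=
  Multiset.cons_bind ..

theorem span_prod_gen_expand {N : ℕ} {s : Multiset (RegularPrime S)}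
    (hN : ∀ A ∈ s, orderOf A.cls ∣ N) :
    Ideal.span {((expand N s).map gen).prod} = (s.map asIdeal).prod ^ N := by
  induction s using Multiset.induction_on with
  | empty => simp [expand, ← Ideal.one_eq_top]
  | cons A s ih =>
    obtain ⟨hA, hs⟩ := Multiset.forall_mem_cons.1 hN
    rw [expand_cons, Multiset.map_add, Multiset.prod_add, Multiset.map_replicate,
      Multiset.prod_replicate, ← Ideal.span_singleton_mul_span_singleton, ih hs,
      ← Ideal.span_singleton_pow, span_primeGen, ← pow_mul, Nat.mul_div_cancel' hA,
      Multiset.map_cons, Multiset.prod_cons, mul_pow]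

theorem associated_prod_gen_expand {N : ℕ} {s : Multiset (RegularPrime S)} {x : R}
    (hN : ∀ A ∈ s, orderOf A.cls ∣ N) (hs : Ideal.span {x} = (s.map asIdeal).prod) :
    Associated ((expand N s).map gen).prod (x ^ N) := by
  rw [← Ideal.span_singleton_eq_span_singleton, span_prod_gen_expand hN, ← hs,
    Ideal.span_singleton_pow]

open Classical in
theorem count_map_expand (htor : IsMulTorsion (ClassGroup R)) {E : Type*}
    (κ : RegularPrime S → E) {N : ℕ} {s : Multiset (RegularPrime S)}
    (hN : ∀ A ∈ s, orderOf A.cls ∣ N) (e : E) :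
    (((expand N s).map κ).count e : ℚ≥0) = N * classWeight cls κ s e := by
  induction s using Multiset.induction_on with
  | empty => simp [expand, classWeight]
  | cons A s ih =>
    obtain ⟨hA, hs⟩ := Multiset.forall_mem_cons.1 hN
    rw [expand_cons, Multiset.map_add, Multiset.count_add, Multiset.map_replicate,
      Multiset.count_replicate, classWeight_cons, mul_add, Nat.cast_add, ih hs, mul_ite, mul_zero,
      Nat.cast_ite, Nat.cast_zero, Nat.cast_div hA (Nat.cast_ne_zero.2 (htor _).orderOf_pos.ne'),
      div_eq_mul_inv]

end RegularPrime

namespace IsTransferQuotient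

open RegularPrime

variable {A B : RegularPrime S} {x y : R} {s t : Multiset (RegularPrime S)}

theorem primeGen_mem (h : IsTransferQuotient S φ) (hx : x ∈ S) {P : HeightOneSpectrum R}
    (hP : x ∈ P.asIdeal) : primeGen P ∈ S :=
  h.mem_of_dvd (primeGen_dvd_pow hP) (S.pow_mem hx _)

theorem exists_span_eq (h : IsTransferQuotient S φ) (hx : x ∈ S) :
    ∃ s : Multiset (RegularPrime S), Ideal.span {x} = (s.map asIdeal).prod := by
  obtain ⟨s, hs⟩ := exists_prod_asIdeal_eq (I := Ideal.span {x})
    (by simpa using h.ne_zero hx)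
  lift s to Multiset (RegularPrime S) using fun P hP => h.primeGen_mem hx <| by
    rw [← Ideal.dvd_span_singleton, ← hs]
    exact Multiset.dvd_prod (Multiset.mem_map_of_mem _ hP)
  exact ⟨s, by rw [← hs, Multiset.map_map]; rfl⟩

theorem exists_mem_asIdeal (h : IsTransferQuotient S φ) (hx : x ∈ S) (hx1 : φ x ≠ 1) :
    ∃ A : RegularPrime S, x ∈ A.asIdeal := by
  obtain ⟨P, hP⟩ := exists_heightOneSpectrum_mem (h.ne_zero hx) (mt (h.map_eq_one_iff hx).2 hx1)
  exact ⟨⟨P, h.primeGen_mem hx hP⟩, hP⟩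

theorem map_gen_ne_one (h : IsTransferQuotient S φ) (htor : IsMulTorsion (ClassGroup R))
    (A : RegularPrime S) : φ A.gen ≠ 1 := fun hA =>
  (irreducible_primeGen (htor _)).not_isUnit ((h.map_eq_one_iff A.2).1 hA)

theorem eq_one_of_map_gen_pow (h : IsTransferQuotient S φ) (htor : IsMulTorsion (ClassGroup R))
    {n : ℕ} (hn : φ A.gen ^ n = φ A.gen) : n = 1 := by
  match n with
  | 0 => exact (h.map_gen_ne_one htor A (by rw [← hn, pow_zero])).elim
  | 1 => rfl
  | n + 2 =>
    have hpow : φ (A.gen ^ (n + 1)) = 1 := by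
      rw [← map_one φ]
      exact h.map_left_cancel A.2 (by rw [map_pow, map_one, mul_one, ← pow_succ', hn])
    have hunit : IsUnit A.gen :=
      (isUnit_pow_iff n.succ_ne_zero).1 ((h.map_eq_one_iff (S.pow_mem A.2 _)).1 hpow)
    exact ((irreducible_primeGen (htor _)).not_isUnit hunit).elim

theorem exists_eq_map_gen_pow (h : IsTransferQuotient S φ) (hx : x ∈ S) (hy : y ∈ S) {N : ℕ}
    (hxy : φ (x * y) = φ B.gen ^ N) : ∃ i, φ x = φ B.gen ^ i := by
  obtain ⟨v, M, hv, hvx⟩ := h.exists_lift hx hy (S.pow_mem B.2 N) (by rw [hxy, map_pow])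
  rw [← pow_mul] at hv
  obtain ⟨i, hi⟩ := exists_associated_primeGen_pow_of_dvd hv
  exact ⟨i, by rw [← hvx, h.map_eq_of_associated hi, map_pow]⟩

theorem map_gen_eq_of_map_gen_mul_eq_pow (h : IsTransferQuotient S φ)
    (htor : IsMulTorsion (ClassGroup R)) (hy : y ∈ S) {N : ℕ}
    (hAy : φ (A.gen * y) = φ B.gen ^ N) : φ A.gen = φ B.gen := by
  obtain ⟨i, hi⟩ := h.exists_eq_map_gen_pow A.2 hy hAy
  match i with
  | 0 => exact (h.map_gen_ne_one htor A (by rw [hi, pow_zero])).elim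
  | i + 1 =>
    obtain ⟨j, hj⟩ := h.exists_eq_map_gen_pow (x := B.gen) (N := 1) B.2 (S.pow_mem B.2 i)
      (by rw [← pow_succ', map_pow, ← hi, pow_one])
    have hij : (i + 1) * j = 1 := h.eq_one_of_map_gen_pow htor (by rw [pow_mul, ← hi, ← hj])
    rw [hj, (mul_eq_one.1 hij).2, pow_one]

theorem exists_mem_map_gen_eq (h : IsTransferQuotient S φ) (htor : IsMulTorsion (ClassGroup R))
    (hy : y ∈ S) (hAy : φ (A.gen * y) = φ (t.map gen).prod) : ∃ B ∈ t, φ B.gen = φ A.gen := by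
  obtain ⟨v, N, hv, hvA⟩ := h.exists_lift A.2 hy (prod_gen_mem t) hAy
  have hvS : v ∈ S := h.mem_of_dvd hv (S.pow_mem (prod_gen_mem t) _)
  obtain ⟨B, hB⟩ := h.exists_mem_asIdeal hvS (hvA ▸ h.map_gen_ne_one htor A)
  refine ⟨B, mem_of_prod_gen_pow_mem (Ideal.mem_of_dvd _ hv hB), ?_⟩
  obtain ⟨w, hw⟩ := primeGen_dvd_pow hB
  exact h.map_gen_eq_of_map_gen_mul_eq_pow htor
    (h.mem_of_dvd (hw ▸ dvd_mul_left w _) (S.pow_mem hvS _)) (by rw [← hw, map_pow, hvA])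

theorem map_gen_eq_map_gen (h : IsTransferQuotient S φ) (htor : IsMulTorsion (ClassGroup R))
    (hst : φ (s.map gen).prod = φ (t.map gen).prod) : s.map (φ ∘ gen) = t.map (φ ∘ gen) := by
  induction s using Multiset.induction_on generalizing t with
  | empty =>
    have hunit : IsUnit (t.map gen).prod :=
      (h.map_eq_one_iff (prod_gen_mem t)).1 (by rw [← hst]; simp)
    rw [Multiset.eq_zero_of_forall_notMem (s := t) fun B hB =>
      (irreducible_primeGen (htor B.cls)).not_isUnit (isUnit_of_dvd_unit
        (Multiset.dvd_prod (Multiset.mem_map_of_mem gen hB)) hunit)]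
  | cons A s ih =>
    rw [Multiset.map_cons, Multiset.prod_cons] at hst
    obtain ⟨B, hB, hBA⟩ := h.exists_mem_map_gen_eq htor (prod_gen_mem s) hst
    obtain ⟨t, rfl⟩ := Multiset.exists_cons_of_mem hB
    rw [Multiset.map_cons, Multiset.prod_cons, map_mul, map_mul, hBA] at hst
    rw [Multiset.map_cons, Multiset.map_cons, ih (h.map_left_cancel A.2 hst), Function.comp_apply,
      Function.comp_apply, hBA]

theorem classWeight_eq (h : IsTransferQuotient S φ) (htor : IsMulTorsion (ClassGroup R))
    (hx : Ideal.span {x} = (s.map asIdeal).prod) (hy : Ideal.span {y} = (t.map asIdeal).prod)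
    (hxy : φ x = φ y) (e : Q) : classWeight cls (φ ∘ gen) s e = classWeight cls (φ ∘ gen) t e := by
  classical
  obtain ⟨N, hN, hdvd⟩ := exists_forall_orderOf_dvd htor (s + t)
  have hs : ∀ A ∈ s, orderOf A.cls ∣ N := fun A hA => hdvd A (Multiset.mem_add.2 (.inl hA))
  have ht : ∀ A ∈ t, orderOf A.cls ∣ N := fun A hA => hdvd A (Multiset.mem_add.2 (.inr hA))
  have hmap : (expand N s).map (φ ∘ gen) = (expand N t).map (φ ∘ gen) := by
    refine h.map_gen_eq_map_gen htor ?_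
    rw [h.map_eq_of_associated (associated_prod_gen_expand hs hx),
      h.map_eq_of_associated (associated_prod_gen_expand ht hy), map_pow, map_pow, hxy]
  refine mul_left_cancel₀ (Nat.cast_ne_zero.2 hN.ne' : (N : ℚ≥0) ≠ 0) ?_
  rw [← count_map_expand htor _ hs, ← count_map_expand htor _ ht, hmap]

theorem hasExchange (h : IsTransferQuotient S φ) (htor : IsMulTorsion (ClassGroup R)) :
    HasExchange (cls (S := S)) (φ ∘ gen) := by
  intro s T hs hT
  obtain ⟨x, hx⟩ := (prod_cls_eq_one_iff s).1 hs
  obtain ⟨N, hN, hdvd⟩ := exists_forall_orderOf_dvd htor s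
  have hass := associated_prod_gen_expand hdvd hx
  have hxN : x ^ N ∈ S := h.mem_of_dvd hass.symm.dvd (prod_gen_mem _)
  have hxS : x ∈ S := h.mem_of_dvd (dvd_pow_self x hN.ne') hxN
  obtain ⟨u, huT, hu⟩ := exists_map_eq_map (s := expand N s) (T := T) (κ := φ ∘ gen) fun A hA => by
    obtain ⟨B, hB, hAB⟩ := Multiset.mem_bind.1 hA
    exact Multiset.eq_of_mem_replicate hAB ▸ hT B hB
  have hc : φ (x * x ^ (N - 1)) = φ (u.map gen).prod := by
    rw [mul_pow_sub_one hN.ne', map_prod_gen, hu, ← map_prod_gen, h.map_eq_of_associated hass]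
  obtain ⟨v, M, hv, hvx⟩ := h.exists_lift hxS (S.pow_mem hxS _) (prod_gen_mem u) hc
  obtain ⟨t, ht⟩ := h.exists_span_eq (h.mem_of_dvd hv (S.pow_mem (prod_gen_mem u) M))
  refine ⟨t, fun B hB => huT B ?_, (prod_cls_eq_one_iff t).2 ⟨v, ht⟩,
    h.classWeight_eq htor ht hx hvx⟩
  exact mem_of_prod_gen_pow_mem (Ideal.mem_of_dvd _ hv (mem_asIdeal_of_mem ht hB))

theorem blockOf_eq_replicate (h : IsTransferQuotient S φ) (htor : IsMulTorsion (ClassGroup R))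
    (hcard : Nat.card (ClassGroup R) ≠ 2) (hcls : Function.Surjective (cls (S := S)))
    (hx : x ∈ S) (hxA : φ x = φ A.gen) :
    blockOf x = Multiset.replicate (orderOf A.cls) A.cls := by
  classical
  obtain ⟨s, hs⟩ := h.exists_span_eq hx
  have hA : Ideal.span {A.gen} = ((Multiset.replicate (orderOf A.cls) A).map asIdeal).prod := by
    rw [Multiset.map_replicate, Multiset.prod_replicate, span_primeGen]
  have hw (e : Q) : classWeight cls (φ ∘ gen) s e =
      if φ A.gen = e then (orderOf A.cls : ℚ≥0) / orderOf A.cls else 0 :=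
    (h.classWeight_eq htor hs hA hxA e).trans (classWeight_replicate ..)
  have hgen : ∀ B ∈ s, (φ ∘ gen) B = φ A.gen := fun B =>
    eq_of_classWeight_eq_zero htor fun e he => (hw e).trans (if_neg he.symm)
  have hclsA : ∀ B ∈ s, B.cls = A.cls := fun B hB =>
    (h.hasExchange htor).eq_of_eq htor hcls hcard (hgen B hB)
  have hcount := classWeight_eq_countP_div (κ := φ ∘ gen) (e := φ A.gen)
    fun B hB _ => congrArg orderOf (hclsA B hB)
  rw [hw, if_pos rfl, Multiset.countP_eq_card.2 hgen,
    div_left_inj' (Nat.cast_ne_zero.2 (htor _).orderOf_pos.ne'), Nat.cast_inj] at hcount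
  rw [blockOf_eq_map_cls hs, Multiset.eq_replicate, Multiset.card_map, ← hcount]
  exact ⟨rfl, Multiset.forall_mem_map_iff.2 hclsA⟩

end IsTransferQuotient

end TransferQuotient

section KrullOvermonoid

theorem IsKrullMonoid.dvd_of_pow_dvd_pow {M : Type*} [CommMonoid M] (h : IsKrullMonoid M) {x y : M}
    {n : ℕ} (hn : n ≠ 0) (hxy : x ^ n ∣ y ^ n) : x ∣ y := by
  obtain ⟨ι, d, hd⟩ := h
  have hpow : d x ^ n ∣ d y ^ n := map_pow d x n ▸ map_pow d y n ▸ map_dvd d hxy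
  have hle : d x ^ n ≤ d y ^ n := le_iff_exists_mul.2 hpow
  refine hd x y (le_iff_exists_mul.1 ?_)
  exact fun i => Nat.le_of_mul_le_mul_left (hle i) (Nat.pos_of_ne_zero hn)

section AssocIn

variable {K : Type*} [CommRing K]

/-- Being associated in `H`, as a congruence of the multiplicative monoid. -/
def assocCon (H : Submonoid K) : Con K where
  r := AssocIn H
  iseqv :=
    { refl := fun x => ⟨1, H.one_mem, ⟨1, H.one_mem, one_mul 1⟩, (mul_one x).symm⟩
      symm := by
        rintro x y ⟨ε, hε, ⟨δ, hδ, hεδ⟩, rfl⟩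
        exact ⟨δ, hδ, ⟨ε, hε, by rw [mul_comm, hεδ]⟩, by rw [mul_assoc, hεδ, mul_one]⟩
      trans := by
        rintro x y z ⟨ε, hε, ⟨δ, hδ, hεδ⟩, rfl⟩ ⟨ε', hε', ⟨δ', hδ', hεδ'⟩, rfl⟩
        refine ⟨ε' * ε, H.mul_mem hε' hε, ⟨δ' * δ, H.mul_mem hδ' hδ, ?_⟩, mul_assoc z ε' ε⟩
        rw [mul_mul_mul_comm, hεδ, hεδ', one_mul] }
  mul' := by
    rintro w x y z ⟨ε, hε, ⟨δ, hδ, hεδ⟩, rfl⟩ ⟨ε', hε', ⟨δ', hδ', hεδ'⟩, rfl⟩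
    refine ⟨ε * ε', H.mul_mem hε hε', ⟨δ * δ', H.mul_mem hδ hδ', ?_⟩, mul_mul_mul_comm x ε z ε'⟩
    rw [mul_mul_mul_comm, hεδ, hεδ', one_mul]

/-- The class of the image of `x` in `K` up to association in `H`. -/
def assocClass (R : Type*) [CommRing R] [Algebra R K] (H : Submonoid K) :
    R →* (assocCon H).Quotient :=
  (assocCon H).mk'.comp (algebraMap R K : R →* K)

theorem assocClass_eq_iff {R : Type*} [CommRing R] [Algebra R K] {H : Submonoid K} {x y : R} :
    assocClass R H x = assocClass R H y ↔ AssocIn H (algebraMap R K x) (algebraMap R K y) :=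
  (assocCon H).eq

end AssocIn

section RegularModConductor

variable {R : Type*} [CommRing R] {O : Subring R} {f : Ideal R} {x : R}

/-- The submonoid of elements regular modulo `f`. -/
def regSubmonoid (f : Ideal R) : Submonoid R :=
  (IsUnit.submonoid (R ⧸ f)).comap (Ideal.Quotient.mk f)

theorem mem_regSubmonoid_of_dvd {y : R} (hxy : x ∣ y) (hy : y ∈ regSubmonoid f) :
    x ∈ regSubmonoid f :=
  isUnit_of_dvd_unit (map_dvd _ hxy) hy

theorem ne_zero_of_mem_regSubmonoid (hO : O ≠ ⊤) (hx : x ∈ regSubmonoid O.conductor) :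
    x ≠ 0 := by
  rintro rfl
  have hunit : IsUnit (Ideal.Quotient.mk O.conductor 0) := hx
  rw [map_zero, isUnit_zero_iff, subsingleton_iff_zero_eq_one,
    Ideal.Quotient.subsingleton_iff] at hunit
  have hone : (1 : R) ∈ O.conductor := hunit ▸ Submodule.mem_top
  exact hO (eq_top_iff.2 fun r _ => one_mul r ▸ hone r)

theorem exists_pow_mem_of_mem_regSubmonoid [Finite (R ⧸ O.conductor)]
    (hx : x ∈ regSubmonoid O.conductor) : ∃ N, 0 < N ∧ x ^ N ∈ O := by
  obtain ⟨u, hu⟩ : IsUnit (Ideal.Quotient.mk O.conductor x) := hx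
  obtain ⟨N, hN, huN⟩ := (isOfFinOrder_of_finite u).exists_pow_eq_one
  have hmem : x ^ N - 1 ∈ O.conductor := by
    rw [← Ideal.Quotient.eq, map_pow, ← hu, ← Units.val_pow_eq_pow_val, huN, Units.val_one]
    exact (map_one _).symm
  have hO : x ^ N - 1 ∈ O := mul_one (x ^ N - 1) ▸ hmem 1
  exact ⟨N, hN, by simpa using O.add_mem hO O.one_mem⟩

theorem primeGen_mem_regSubmonoid [IsDedekindDomain R] {P : IsDedekindDomain.HeightOneSpectrum R}
    (hP : ¬ f ≤ P.asIdeal) : primeGen P ∈ regSubmonoid f := by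
  have hcop : IsCoprime (Ideal.span {primeGen P}) f := by
    rw [span_primeGen]
    refine IsCoprime.pow_left (Ideal.isCoprime_iff_sup_eq.2 ?_)
    exact P.isMaximal.1.2 _ (lt_of_le_of_ne le_sup_left fun h => hP (h ▸ le_sup_right))
  obtain ⟨i, hi, j, hj, hij⟩ := Ideal.isCoprime_iff_exists.1 hcop
  obtain ⟨w, rfl⟩ := Ideal.mem_span_singleton.1 hi
  refine IsUnit.of_mul_eq_one (Ideal.Quotient.mk f w) ?_
  rw [← map_mul, ← map_one (Ideal.Quotient.mk f), ← hij, map_add,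
    Ideal.Quotient.eq_zero_iff_mem.2 hj, add_zero]

end RegularModConductor

namespace IsTKOvermonoid

variable {R : Type*} [CommRing R] [IsDedekindDomain R] {O : Subring R}
  {H : Submonoid (FractionRing R)} {x y c : R} {N : ℕ}

-- `H` contains `b` and `b * x` and is root-closed: `b ^ N ∣ (b * x) ^ N` in `H` gives `b ∣ b * x`.
theorem algebraMap_mem_s11 (hH : IsTKOvermonoid O H) (hx : x ≠ 0) (hN : N ≠ 0) (hxN : x ^ N ∈ O)
    (hfrac : ∃ a b : O, (b : R) ≠ 0 ∧ b * x = a) : algebraMap R (FractionRing R) x ∈ H := by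
  obtain ⟨a, b, hb, hbx⟩ := hfrac
  have ha : (a : R) ≠ 0 := hbx ▸ mul_ne_zero hb hx
  have hdvd : (⟨_, hH.incl b b.2 hb⟩ : H) ∣ ⟨_, hH.incl a a.2 ha⟩ := by
    refine hH.krull.dvd_of_pow_dvd_pow hN ⟨⟨_, hH.incl _ hxN (pow_ne_zero _ hx)⟩, ?_⟩
    ext
    simp [← hbx, mul_pow]
  obtain ⟨z, hz⟩ := hdvd
  have hbxz : algebraMap R (FractionRing R) b * algebraMap R (FractionRing R) x =
      algebraMap R (FractionRing R) b * z := by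
    rw [← map_mul, hbx]
    exact congrArg Subtype.val hz
  rw [mul_left_cancel₀ (by simpa using hb) hbxz]
  exact z.2

theorem isUnit_of_assocClass_eq_one (hH : IsTKOvermonoid O H) (hx : x ≠ 0) (hN : N ≠ 0)
    (hxN : x ^ N ∈ O) (hx1 : assocClass R H x = 1) : IsUnit x := by
  rw [← map_one (assocClass R H), assocClass_eq_iff, map_one] at hx1
  obtain ⟨ε, -, ⟨δ, hδ, hεδ⟩, hxε⟩ := hx1
  obtain ⟨y, -, hy⟩ := hH.t1' _ hxN (pow_ne_zero _ hx)
    ⟨δ ^ N, H.pow_mem hδ N, by rw [map_pow, hxε, ← mul_pow, one_mul, hεδ, one_pow]⟩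
  exact (isUnit_pow_iff hN).1 (IsUnit.of_mul_eq_one _ hy)

theorem exists_dvd_pow_assocClass_eq (hH : IsTKOvermonoid O H)
    (hx : algebraMap R (FractionRing R) x ∈ H) (hy : algebraMap R (FractionRing R) y ∈ H)
    (hc : algebraMap R (FractionRing R) c ∈ H) (hN : N ≠ 0) (hcN : c ^ N ∈ O)
    (hxy : assocClass R H (x * y) = assocClass R H c) :
    ∃ v, v ∣ c ^ N ∧ assocClass R H v = assocClass R H x := by
  have hc0 : c ≠ 0 := fun h => hH.nonzero _ hc (by rw [h, map_zero])
  obtain ⟨ε, hε, -, hcε⟩ := assocClass_eq_iff.1 hxy.symm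
  obtain ⟨v, w, -, -, hvw, hvx, -⟩ := hH.t2 _ hcN (pow_ne_zero _ hc0) _ hx
    (algebraMap R _ y * ε * algebraMap R _ c ^ (N - 1))
    (H.mul_mem (H.mul_mem hy hε) (H.pow_mem hc _)) (by
      rw [map_pow, ← mul_pow_sub_one hN, ← mul_assoc, ← mul_assoc, ← map_mul, ← hcε])
  exact ⟨v, ⟨w, hvw⟩, assocClass_eq_iff.2 hvx⟩

theorem isTransferQuotient [Finite (R ⧸ O.conductor)] (hH : IsTKOvermonoid O H) (hO : O ≠ ⊤)
    (hfrac : ∀ r : R, ∃ a b : O, (b : R) ≠ 0 ∧ b * r = a) :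
    IsTransferQuotient (regSubmonoid O.conductor) (assocClass R H) := by
  have hne {x : R} : x ∈ regSubmonoid O.conductor → x ≠ 0 := ne_zero_of_mem_regSubmonoid hO
  have hmem {x : R} (hx : x ∈ regSubmonoid O.conductor) : algebraMap R (FractionRing R) x ∈ H := by
    obtain ⟨N, hN, hxN⟩ := exists_pow_mem_of_mem_regSubmonoid hx
    exact hH.algebraMap_mem_s11 (hne hx) hN.ne' hxN (hfrac x)
  refine ⟨mem_regSubmonoid_of_dvd, hne, fun hx => ⟨fun hx1 => ?_, ?_⟩, fun hz hzxy => ?_,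
    fun hx hy hc hxy => ?_⟩
  · obtain ⟨N, hN, hxN⟩ := exists_pow_mem_of_mem_regSubmonoid hx
    exact hH.isUnit_of_assocClass_eq_one (hne hx) hN.ne' hxN hx1
  · rintro ⟨u, rfl⟩
    rw [← map_one (assocClass R H), assocClass_eq_iff]
    exact ⟨_, hmem (u.isUnit.map _), ⟨_, hmem (u⁻¹.isUnit.map _), by rw [← map_mul]; simp⟩,
      by simp⟩
  · rw [← map_mul, ← map_mul, assocClass_eq_iff, map_mul, map_mul] at hzxy
    obtain ⟨ε, hε, hε', h⟩ := hzxy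
    rw [mul_assoc] at h
    exact assocClass_eq_iff.2 ⟨ε, hε, hε', mul_left_cancel₀ (hH.nonzero _ (hmem hz)) h⟩
  · obtain ⟨N, hN, hcN⟩ := exists_pow_mem_of_mem_regSubmonoid hc
    obtain ⟨v, hv⟩ :=
      hH.exists_dvd_pow_assocClass_eq (hmem hx) (hmem hy) (hmem hc) hN.ne' hcN hxy
    exact ⟨v, N, hv⟩

end IsTKOvermonoid

theorem surjective_cls_regSubmonoid {R : Type*} [CommRing R] [IsDedekindDomain R] {f : Ideal R}
    (hcls : ∀ c : ClassGroup R, ∃ (P : Ideal R) (hP : P ∈ (Ideal R)⁰),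
      P.IsPrime ∧ ¬ f ≤ P ∧ ClassGroup.mk0 ⟨P, hP⟩ = c) :
    Function.Surjective (RegularPrime.cls (S := regSubmonoid f)) := by
  intro c
  obtain ⟨P, hP, hprime, hfP, rfl⟩ := hcls c
  exact ⟨⟨⟨P, hprime, nonZeroDivisors.ne_zero hP⟩, primeGen_mem_regSubmonoid hfP⟩, rfl⟩

end KrullOvermonoid

theorem block_eq_of_assoc_abs_irreducible
    {R : Type*} [CommRing R] [IsDomain R] [IsDedekindDomain R]
    (O : Subring R) (hne : O ≠ ⊤) (hfg : Module.Finite ↥O R)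
    (hfrac : ∀ r : R, ∃ a b : ↥O, (b : R) ≠ 0 ∧ (b : R) * r = (a : R))
    (htor : ∀ c : ClassGroup R, ∃ n : ℕ, 0 < n ∧ c ^ n = 1)
    (hfin : Finite (R ⧸ O.conductor))
    (hcls : ∀ c : ClassGroup R, ∃ (P : Ideal R) (hP : P ∈ (Ideal R)⁰),
      P.IsPrime ∧ ¬ O.conductor ≤ P ∧ ClassGroup.mk0 ⟨P, hP⟩ = c)
    (H : Submonoid (FractionRing R)) (hH : IsTKOvermonoid O H)
    (hcard : Nat.card (ClassGroup R) ≠ 2)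
    (a b : R) (hrega : RegF O.conductor a) (hregb : RegF O.conductor b)
    (hassoc : AssocIn H (algebraMap R (FractionRing R) a) (algebraMap R (FractionRing R) b))
    (habs : AbsolutelyIrreducible a) :
    blockOf a = blockOf b := by
  have htorsion : IsMulTorsion (ClassGroup R) := fun c =>
    isOfFinOrder_iff_pow_eq_one.2 (htor c)
  have hφ := hH.isTransferQuotient hne hfrac
  obtain ⟨P, hPa⟩ := exists_associated_primeGen habs htorsion
  let A : RegularPrime (regSubmonoid O.conductor) := ⟨P, mem_regSubmonoid_of_dvd hPa.dvd hrega⟩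
  have haA : assocClass R H a = assocClass R H A.gen := hφ.map_eq_of_associated hPa.symm
  have hbA : assocClass R H b = assocClass R H A.gen := (assocClass_eq_iff.2 hassoc).symm.trans haA
  have hblock {x : R} := hφ.blockOf_eq_replicate (x := x) (A := A) htorsion hcard
    (surjective_cls_regSubmonoid hcls)
  rw [hblock hrega haA, hblock hregb hbA]
end
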